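/- If λ_1 and λ_2 are Dyck paths of order n whose chord posets P_{λ_1} and P_{λ_2} are isomorphic as posets, then the generating functions of their cover-inclusive Dyck tilings by the discrepancy statistic coincide: Σ_{T ∈ D(λ_1,*)} z^{dis(T)} = Σ_{T ∈ D(λ_2,*)} z^{dis(T)}. -/

import Mathlib

open Finset

noncomputable section

/-- A Dyck path of order `n`: a word of `2n` steps (`true` = up-step `(+1,+1)`,
`false` = down-step `(+1,-1)`) from `(-n,0)` to `(n,0)` staying weakly above the x-axis. -/
structure DyckPath (n : ℕ) where
  step : Fin (2 * n) → Bool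
  balanced : (Finset.univ.filter fun i => step i = true).card = n
  nonneg : ∀ k : ℕ, k ≤ 2 * n →
    (Finset.univ.filter fun i : Fin (2 * n) => (i : ℕ) < k ∧ step i = false).card ≤
      (Finset.univ.filter fun i : Fin (2 * n) => (i : ℕ) < k ∧ step i = true).card

namespace DyckPath

/-- Height of the path above column `x` (columns run from `-n` to `n`). -/
def ht {n : ℕ} (P : DyckPath n) (x : ℤ) : ℤ :=
  ((Finset.univ.filter fun i : Fin (2 * n) => ((i : ℕ) : ℤ) < x + n ∧ P.step i = true).card : ℤ) -
    ((Finset.univ.filter fun i : Fin (2 * n) => ((i : ℕ) : ℤ) < x + n ∧ P.step i = false).card : ℤ)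

/-- Height of the path at lattice point number `k`, `0 ≤ k ≤ 2n`
(point `k` lies at column `k - n`). -/
def pt {n : ℕ} (P : DyckPath n) (k : ℕ) : ℤ := P.ht ((k : ℤ) - n)

end DyckPath

/-- `IsChord P p q`: the up-step at (0-indexed) position `p` matches the down-step at
position `q`, forming a chord of `P`. -/
def IsChord {n : ℕ} (P : DyckPath n) (p q : ℕ) : Prop :=
  p < q ∧ q < 2 * n ∧
    (∃ hp : p < 2 * n, P.step ⟨p, hp⟩ = true) ∧
    (∃ hq : q < 2 * n, P.step ⟨q, hq⟩ = false) ∧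
    P.pt (q + 1) = P.pt p ∧
    ∀ m : ℕ, p < m → m ≤ q → P.pt p < P.pt m

/-- A natural labeling of the chord poset of `P`: the chord labeled `i` has its up-step at
(0-indexed) position `l i` and matching down-step at position `r i`; distinct labels name
distinct chords; and if one chord is nested inside another it receives a larger label. -/
structure ChordLabeling {n : ℕ} (P : DyckPath n) where
  l : Fin n → ℕ
  r : Fin n → ℕ
  chord : ∀ i, IsChord P (l i) (r i)
  inj : Function.Injective l
  natural : ∀ i j : Fin n, l j < l i → r i < r j → j < i

/-- The length of the chord labeled `i`: the number of up steps of `P` between and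
including its two endpoints. -/
def chordLen {n : ℕ} {P : DyckPath n} (C : ChordLabeling P) (i : Fin n) : ℕ :=
  (Finset.univ.filter fun m : Fin (2 * n) =>
    C.l i ≤ (m : ℕ) ∧ (m : ℕ) ≤ C.r i ∧ P.step m = true).card

/-- The growth sequence `p_1, …, p_n` associated with a natural chord labeling:
`p i = #{j<i : l j < l i} + #{j<i : r j < l i}`. -/
def seqOf {n : ℕ} {P : DyckPath n} (C : ChordLabeling P) (i : Fin n) : ℕ :=
  (Finset.univ.filter fun j : Fin n => j < i ∧ C.l j < C.l i).card +
    (Finset.univ.filter fun j : Fin n => j < i ∧ C.r j < C.l i).card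

/-- `σ` is the standardization of the word `w` (with distinct letters). -/
def IsStandardization {n : ℕ} (w : Fin n → ℕ) (σ : Equiv.Perm (Fin n)) : Prop :=
  ∀ i j : Fin n, σ i < σ j ↔ w i < w j

/-- `σ ∈ 𝓛(P_λ)`: σ is `L₀ ∘ L⁻¹` for some natural labeling `L` of the chord poset,
equivalently the standardization of the word of left endpoints of a natural labeling. -/
def LinExt {n : ℕ} (P : DyckPath n) (σ : Equiv.Perm (Fin n)) : Prop :=
  ∃ C : ChordLabeling P, IsStandardization C.l σ

/-- Successor index in `Fin n` (used only under the guard `i+1 < n`). -/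
def nextIdx {n : ℕ} (i : Fin n) : Fin n := ⟨((i : ℕ) + 1) % n, Nat.mod_lt _ i.pos⟩

/-- Descent set of a word: positions `i` with `i+1 < n` and `w i > w (i+1)`. -/
def descentFinset {n : ℕ} (w : Fin n → ℕ) : Finset (Fin n) :=
  Finset.univ.filter fun i => (i : ℕ) + 1 < n ∧ w (nextIdx i) < w i

/-- Number of inversions of a word. -/
def wordInv {n : ℕ} (w : Fin n → ℕ) : ℕ :=
  (Finset.univ.filter fun p : Fin n × Fin n => p.1 < p.2 ∧ w p.2 < w p.1).card

/-- The word of values of a permutation. -/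
def permWord {n : ℕ} (σ : Equiv.Perm (Fin n)) : Fin n → ℕ := fun i => (σ i : ℕ)

/-- inv(σ). -/
def permInv {n : ℕ} (σ : Equiv.Perm (Fin n)) : ℕ := wordInv (permWord σ)

/-- des(σ). -/
def permDes {n : ℕ} (σ : Equiv.Perm (Fin n)) : ℕ := (descentFinset (permWord σ)).card

/-- `REM_i(w) = {k > i : w i > w k > w (i+1)}`, the right embraced numbers. -/
def remSet {n : ℕ} (w : Fin n → ℕ) (i : Fin n) : Finset (Fin n) :=
  Finset.univ.filter fun k => i < k ∧ w (nextIdx i) < w k ∧ w k < w i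

/-- desdif(σ) = Σ_{i ∈ DES σ} (σ i − σ (i+1)). -/
def desdif {n : ℕ} (σ : Equiv.Perm (Fin n)) : ℕ :=
  ∑ i ∈ descentFinset (permWord σ), (permWord σ i - permWord σ (nextIdx i))

/-- res(σ) = Σ_{i ∈ DES σ} #{k < i : σ i > σ k > σ (i+1)}. -/
def resStat {n : ℕ} (σ : Equiv.Perm (Fin n)) : ℕ :=
  ∑ i ∈ descentFinset (permWord σ),
    (Finset.univ.filter fun k : Fin n =>
      k < i ∧ permWord σ (nextIdx i) < permWord σ k ∧ permWord σ k < permWord σ i).card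

/-- The Mahonian statistic mad(σ) = desdif(σ) + res(σ). -/
def mad {n : ℕ} (σ : Equiv.Perm (Fin n)) : ℕ := desdif σ + resStat σ

/-- σ avoids the pattern 231. -/
def Avoids231 {n : ℕ} (σ : Equiv.Perm (Fin n)) : Prop :=
  ¬∃ i j k : Fin n, i < j ∧ j < k ∧ σ k < σ i ∧ σ i < σ j

/-- The boxes of the skew shape `lam/mu` (with `mu` weakly above `lam`), each box
recorded by its bottom corner (a lattice point `(x, z)` with `z ≡ x + n (mod 2)`). -/
def skewCells {n : ℕ} (lam mu : DyckPath n) : Finset (ℤ × ℤ) :=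
  ((Finset.Icc (-(n : ℤ)) n) ×ˢ (Finset.Icc (0 : ℤ) n)).filter fun c =>
    lam.ht c.1 ≤ c.2 ∧ c.2 + 2 ≤ mu.ht c.1 ∧ (c.2 - c.1 - n) % 2 = 0

/-- A Dyck tile, recorded by the set of bottom corners of its boxes: these form
a Dyck-path shape, i.e. a ±1-step lattice path whose two ends are lowest. -/
def IsDyckTile (t : Finset (ℤ × ℤ)) : Prop :=
  ∃ (a b : ℤ) (f : ℤ → ℤ), a ≤ b ∧
    (∀ x : ℤ, a ≤ x → x < b → f (x + 1) = f x + 1 ∨ f (x + 1) = f x - 1) ∧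
    f b = f a ∧ (∀ x : ℤ, a ≤ x → x ≤ b → f a ≤ f x) ∧
    t = (Finset.Icc a b).image fun x => (x, f x)

/-- A Dyck tiling of order `n`: a tiling of the skew shape between two Dyck paths of
order `n` by Dyck tiles. -/
structure DyckTiling (n : ℕ) where
  lower : DyckPath n
  upper : DyckPath n
  below : ∀ x : ℤ, lower.ht x ≤ upper.ht x
  tiles : Finset (Finset (ℤ × ℤ))
  isDyck : ∀ t ∈ tiles, IsDyckTile t
  disj : ∀ t ∈ tiles, ∀ u ∈ tiles, t ≠ u → Disjoint t u
  cover : tiles.biUnion id = skewCells lower upper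

namespace DyckTiling

/-- Number of boxes of the skew shape. -/
def area {n : ℕ} (T : DyckTiling n) : ℕ := (skewCells T.lower T.upper).card

/-- Number of tiles. -/
def numTiles {n : ℕ} (T : DyckTiling n) : ℕ := T.tiles.card

/-- art(T) = (area(T) + tiles(T)) / 2. -/
def art {n : ℕ} (T : DyckTiling n) : ℕ := (T.area + T.numTiles) / 2

/-- dis(T): the number of step positions where the lower path steps down while the
upper path steps up. -/
def dis {n : ℕ} (T : DyckTiling n) : ℕ :=
  (Finset.univ.filter fun i : Fin (2 * n) =>
    T.lower.step i = false ∧ T.upper.step i = true).card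

/-- Cover-inclusiveness: whenever a tile has a box strictly above a box of another tile,
its horizontal extent is contained in that of the other tile. -/
def CoverInclusive {n : ℕ} (T : DyckTiling n) : Prop :=
  ∀ t ∈ T.tiles, ∀ u ∈ T.tiles,
    (∃ p ∈ t, ∃ q ∈ u, (p : ℤ × ℤ).1 = (q : ℤ × ℤ).1 ∧ (q : ℤ × ℤ).2 < (p : ℤ × ℤ).2) →
    ∀ p ∈ t, ∃ y : ℤ, ((p : ℤ × ℤ).1, y) ∈ u

end DyckTiling

/-- Height function of the spread at column `s` of a Dyck path. -/
def spreadHt {n : ℕ} (P : DyckPath n) (s x : ℤ) : ℤ :=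
  if x < s then P.ht (x + 1) else if x = s then P.ht s + 1 else P.ht (x - 1)

/-- Spread of a tile at column `s`: points left of `s` move left, points right of `s`
move right, and a point at column `s` is duplicated upward. -/
def spreadTile (s : ℤ) (t : Finset (ℤ × ℤ)) : Finset (ℤ × ℤ) :=
  ((t.filter fun p => p.1 ≤ s).image fun p => (p.1 - 1, p.2)) ∪
    ((t.filter fun p => p.1 = s).image fun p => (p.1, p.2 + 1)) ∪
    ((t.filter fun p => s ≤ p.1).image fun p => (p.1 + 1, p.2))

/-- Spread of a set of tiles at column `s`. -/
def spreadTiles (s : ℤ) (ts : Finset (Finset (ℤ × ℤ))) : Finset (Finset (ℤ × ℤ)) :=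
  ts.image (spreadTile s)

/-- Column `c` is eligible for a tiling with upper-boundary height function `h` and
tile set `ts`: the upper boundary has an up step ending at column `c`, and its point at
column `c` is not the top corner of a one-box tile. -/
def EligibleCol (h : ℤ → ℤ) (ts : Finset (Finset (ℤ × ℤ))) (c : ℤ) : Prop :=
  h c = h (c - 1) + 1 ∧ ({(c, h c - 2)} : Finset (ℤ × ℤ)) ∉ ts

/-- `T'` is the result of the strip-grow map applied to `(T, s)`: spread `T` at `s` and
add a one-box tile on each up step of the (spread) upper boundary starting at a column
`≥ s` (i.e. strictly to the right of column `s`). -/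
def StripGrowRel {n : ℕ} (T : DyckTiling n) (s : ℤ) (T' : DyckTiling (n + 1)) : Prop :=
  (∀ x : ℤ, T'.lower.ht x = spreadHt T.lower s x) ∧
  (∀ x : ℤ, T'.upper.ht x =
    if s ≤ x ∧ spreadHt T.upper s (x + 1) = spreadHt T.upper s x + 1 then
      spreadHt T.upper s x + 2
    else spreadHt T.upper s x) ∧
  T'.tiles = spreadTiles s T.tiles ∪
    ((Finset.Icc s (n : ℤ)).filter fun x =>
        spreadHt T.upper s (x + 1) = spreadHt T.upper s x + 1).image
      (fun x => ({(x, spreadHt T.upper s x)} : Finset (ℤ × ℤ)))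

/-- `T'` is the result of the ribbon-grow map applied to `(T, s)`: spread `T` at `s`,
and if the special column `Q` of the spread tiling is strictly right of `s`, add a
ribbon of one-box tiles at all columns strictly between `s` and `Q`. -/
def RibbonGrowRel {n : ℕ} (T : DyckTiling n) (s : ℤ) (T' : DyckTiling (n + 1)) : Prop :=
  (∀ x : ℤ, T'.lower.ht x = spreadHt T.lower s x) ∧
  ∃ Q : ℤ,
    EligibleCol (spreadHt T.upper s) (spreadTiles s T.tiles) Q ∧
    (∀ c : ℤ, EligibleCol (spreadHt T.upper s) (spreadTiles s T.tiles) c → c ≤ Q) ∧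
    (∀ x : ℤ, T'.upper.ht x =
      if s < x ∧ x < Q then spreadHt T.upper s x + 2 else spreadHt T.upper s x) ∧
    T'.tiles = spreadTiles s T.tiles ∪
      (Finset.Ioo s Q).image (fun x => ({(x, spreadHt T.upper s x)} : Finset (ℤ × ℤ)))

/-- `s` is the special column of `T`: its rightmost eligible column. -/
def SpecialCol {n : ℕ} (T : DyckTiling n) (s : ℤ) : Prop :=
  EligibleCol T.upper.ht T.tiles s ∧ ∀ c : ℤ, EligibleCol T.upper.ht T.tiles c → c ≤ s

/-- In the strip-shrink map applied to `T'` with special column `s`, a one-box tile is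
removed at column `x`: `x` is right of `s` and there is a one-box tile there that is
part of an up step of the upper boundary. -/
def StripRemovedAt {n : ℕ} (T' : DyckTiling n) (s x : ℤ) : Prop :=
  s < x ∧ T'.upper.ht x = T'.upper.ht (x - 1) + 1 ∧
    ({(x, T'.upper.ht x - 2)} : Finset (ℤ × ℤ)) ∈ T'.tiles

instance {n : ℕ} (T' : DyckTiling n) (s x : ℤ) : Decidable (StripRemovedAt T' s x) := by
  unfold StripRemovedAt; infer_instance

/-- `(T, s)` is the result of the strip-shrink map applied to `T'`: `s` is the special
column of `T'`; all one-box tiles right of `s` lying on up steps of the upper boundary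
are removed; and the result is the spread of `T` at `s`. -/
def StripShrinkRel {n : ℕ} (T' : DyckTiling (n + 1)) (T : DyckTiling n) (s : ℤ) : Prop :=
  SpecialCol T' s ∧
  (∀ x : ℤ, spreadHt T.lower s x = T'.lower.ht x) ∧
  (∀ x : ℤ, spreadHt T.upper s x =
    if StripRemovedAt T' s x then T'.upper.ht x - 2 else T'.upper.ht x) ∧
  spreadTiles s T.tiles =
    T'.tiles \ (((Finset.Ioc s ((n : ℤ) + 1)).filter fun x => StripRemovedAt T' s x).image
      fun x => ({(x, T'.upper.ht x - 2)} : Finset (ℤ × ℤ)))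

/-- `(T, s)` is the result of the ribbon-shrink map applied to `T'`: `s` is the special
column of `T'`; the maximal run of topmost one-box tiles in columns `s+1, s+2, …` is
removed; and the result is the spread of `T` at `s`. -/
def RibbonShrinkRel {n : ℕ} (T' : DyckTiling (n + 1)) (T : DyckTiling n) (s : ℤ) : Prop :=
  SpecialCol T' s ∧
  ∃ r : ℤ, s < r ∧
    (∀ x : ℤ, s < x → x < r → ({(x, T'.upper.ht x - 2)} : Finset (ℤ × ℤ)) ∈ T'.tiles) ∧
    ({(r, T'.upper.ht r - 2)} : Finset (ℤ × ℤ)) ∉ T'.tiles ∧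
    (∀ x : ℤ, spreadHt T.lower s x = T'.lower.ht x) ∧
    (∀ x : ℤ, spreadHt T.upper s x =
      if s < x ∧ x < r then T'.upper.ht x - 2 else T'.upper.ht x) ∧
    spreadTiles s T.tiles =
      T'.tiles \ ((Finset.Ioo s r).image fun x => ({(x, T'.upper.ht x - 2)} : Finset (ℤ × ℤ)))

/-- `IsDTS n p T`: `T` is the Dyck tiling `DTS(p_1, …, p_n)` (indices 0-based, so the
growth column for step `i` is `p i - i`). -/
inductive IsDTS : (n : ℕ) → (Fin n → ℕ) → DyckTiling n → Prop where
  | nil (p : Fin 0 → ℕ) (T : DyckTiling 0) : IsDTS 0 p T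
  | cons (n : ℕ) (p : Fin (n + 1) → ℕ) (T : DyckTiling n) (T' : DyckTiling (n + 1)) :
      IsDTS n (fun i => p i.castSucc) T →
      StripGrowRel T ((p (Fin.last n) : ℤ) - n) T' → IsDTS (n + 1) p T'

/-- `IsDTR n p T`: `T` is the Dyck tiling `DTR(p_1, …, p_n)`. -/
inductive IsDTR : (n : ℕ) → (Fin n → ℕ) → DyckTiling n → Prop where
  | nil (p : Fin 0 → ℕ) (T : DyckTiling 0) : IsDTR 0 p T
  | cons (n : ℕ) (p : Fin (n + 1) → ℕ) (T : DyckTiling n) (T' : DyckTiling (n + 1)) :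
      IsDTR n (fun i => p i.castSucc) T →
      RibbonGrowRel T ((p (Fin.last n) : ℤ) - n) T' → IsDTR (n + 1) p T'

/-- `T = DTS(λ, σ)`. -/
def IsDTSof {n : ℕ} (lam : DyckPath n) (σ : Equiv.Perm (Fin n)) (T : DyckTiling n) : Prop :=
  ∃ C : ChordLabeling lam, IsStandardization C.l σ ∧ IsDTS n (seqOf C) T

/-- `T = DTR(λ, σ)`. -/
def IsDTRof {n : ℕ} (lam : DyckPath n) (σ : Equiv.Perm (Fin n)) (T : DyckTiling n) : Prop :=
  ∃ C : ChordLabeling lam, IsStandardization C.l σ ∧ IsDTR n (seqOf C) T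

/-- Increment `a` if it exceeds `p`. -/
def bump (p a : ℕ) : ℕ := if p < a then a + 1 else a

/-- The perfect matching `match(p_1, …, p_n)` of `{1, …, 2n}`. -/
def matchSeq : (n : ℕ) → (Fin n → ℕ) → Finset (ℕ × ℕ)
  | 0, _ => ∅
  | n + 1, p =>
    ((matchSeq n fun i => p i.castSucc).image fun q =>
      (bump (p (Fin.last n)) q.1, bump (p (Fin.last n)) q.2)) ∪
      {(p (Fin.last n) + 1, 2 * (n + 1))}

/-- The number of nestings of a matching: pairs `(a,b)`, `(c,d)` with `c < a < b < d`. -/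
def nestings (M : Finset (ℕ × ℕ)) : ℕ :=
  ((M ×ˢ M).filter fun q => q.2.1 < q.1.1 ∧ q.1.1 < q.1.2 ∧ q.1.2 < q.2.2).card

/-- `w` is the min-word of `M`: the list of the smaller elements of the pairs of `M`,
sorted by the larger elements. -/
def IsMinWord (n : ℕ) (M : Finset (ℕ × ℕ)) (w : Fin n → ℕ) : Prop :=
  ∃ b : Fin n → ℕ, StrictMono b ∧ (∀ i, w i < b i) ∧
    M = Finset.univ.image fun i => (w i, b i)

/-- The number of tiles of `T` containing boxes over both endpoint columns of the
chord with endpoints at step positions `p < q`. -/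
def chordTileCount {n : ℕ} (T : DyckTiling n) (p q : ℕ) : ℕ :=
  (T.tiles.filter fun t =>
    (∃ c ∈ t, (c : ℤ × ℤ).1 = (p : ℤ) + 1 - n) ∧ (∃ c ∈ t, (c : ℤ × ℤ).1 = (q : ℤ) - n)).card

/-- A Dyck tableau of order `n` over the zigzag path `Z` of order `n+1`: a skew shape
`Z/μ` with `n` dots, one in each column of the skew shape through a valley of `Z`. -/
structure DyckTableau (n : ℕ) (Z : DyckPath (n + 1)) where
  upper : DyckPath (n + 1)
  below : ∀ x : ℤ, Z.ht x ≤ upper.ht x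
  dots : Finset (ℤ × ℤ)
  sub : dots ⊆ skewCells Z upper
  card_dots : dots.card = n
  valley : ∀ x : ℤ, Z.ht (x - 1) = Z.ht x + 1 → Z.ht (x + 1) = Z.ht x + 1 →
    (dots.filter fun c => c.1 = x).card = 1

/-- The `q`-integer `[m]_q = 1 + q + ⋯ + q^(m-1)` as a polynomial. -/
def qint (m : ℕ) : Polynomial ℤ := ∑ i ∈ Finset.range m, Polynomial.X ^ i

/-- The `q`-factorial `[n]_q!`. -/
def qfact (n : ℕ) : Polynomial ℤ := ∏ i ∈ Finset.range n, qint (i + 1)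

/-! ### Transfer operators and their common eigenvectors -/

section Operators

variable {K : Type*} [Field K]

/-- The coefficients of `x ^ i` in `z ^ m (1 + x) ^ m / (x + z) ^ (m + 1)`; the sequences
`eigenSeq z m` are the common eigenvectors of all transfer operators. -/
def eigenSeq (z : K) : ℕ → ℕ → K
  | _, 0 => z⁻¹
  | 0, i + 1 => -eigenSeq z 0 i / z
  | m + 1, i + 1 => eigenSeq z m (i + 1) + eigenSeq z m i - eigenSeq z (m + 1) i / z

/-- The shift operator `f ↦ f (· + t)`. -/
def shiftBy (K : Type*) [Field K] (t : ℕ) : (ℕ → K) →ₗ[K] (ℕ → K) :=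
  LinearMap.funLeft K K (fun j => j + t)

@[simp] lemma shiftBy_apply (t : ℕ) (f : ℕ → K) (j : ℕ) : shiftBy K t f j = f (j + t) := rfl

/-- The transfer operator of a down step. -/
def downOp (z : K) : (ℕ → K) →ₗ[K] (ℕ → K) := LinearMap.id + z • shiftBy K 1

@[simp] lemma downOp_apply (z : K) (f : ℕ → K) (j : ℕ) :
    downOp z f j = f j + z * f (j + 1) := rfl

/-- The transfer operator of an up step. -/
def upOp (K : Type*) [Field K] : (ℕ → K) →ₗ[K] (ℕ → K) where
  toFun f i := f i + if i = 0 then 0 else f (i - 1)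
  map_add' f g := by
    ext i
    by_cases h : i = 0 <;> simp [h]; ring
  map_smul' a f := by
    ext i
    by_cases h : i = 0 <;> simp [h]; ring

lemma upOp_zero (f : ℕ → K) : upOp K f 0 = f 0 := by simp [upOp]

lemma upOp_succ (f : ℕ → K) (i : ℕ) : upOp K f (i + 1) = f (i + 1) + f i := by simp [upOp]

/-- The transfer operator of `U A D`, where `F` is the transfer operator of `A`. -/
def wrapOp (z : K) (F : (ℕ → K) →ₗ[K] (ℕ → K)) : (ℕ → K) →ₗ[K] (ℕ → K) :=
  LinearMap.pi fun i => ∑ t ∈ range (i + 1),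
    LinearMap.proj (i - t) ∘ₗ upOp K ∘ₗ F ∘ₗ downOp z ∘ₗ shiftBy K t

lemma wrapOp_apply (z : K) (F : (ℕ → K) →ₗ[K] (ℕ → K)) (f : ℕ → K) (i : ℕ) :
    wrapOp z F f i =
      ∑ t ∈ range (i + 1), upOp K (F (downOp z (shiftBy K t f))) (i - t) := by
  simp [wrapOp]

lemma shiftBy_zero (f : ℕ → K) : shiftBy K 0 f = f := rfl

lemma wrapOp_zero (z : K) (F : (ℕ → K) →ₗ[K] (ℕ → K)) (f : ℕ → K) :
    wrapOp z F f 0 = F (downOp z f) 0 := by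
  simp [wrapOp_apply, upOp_zero, shiftBy_zero]

lemma wrapOp_succ (z : K) (F : (ℕ → K) →ₗ[K] (ℕ → K)) (f : ℕ → K) (i : ℕ) :
    wrapOp z F f (i + 1) = wrapOp z F (shiftBy K 1 f) i +
      (F (downOp z f) (i + 1) + F (downOp z f) i) := by
  rw [wrapOp_apply, sum_range_succ', wrapOp_apply]
  rw [shiftBy_zero, Nat.sub_zero, upOp_succ]
  refine congrArg (· + _) (sum_congr rfl fun t _ => ?_)
  rw [Nat.add_sub_add_right]
  rfl

lemma eigenSeq_zero (z : K) (m : ℕ) : eigenSeq z m 0 = z⁻¹ := by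
  cases m <;> rw [eigenSeq]

lemma eigenSeq_succ_succ (z : K) (m i : ℕ) :
    eigenSeq z (m + 1) (i + 1) =
      eigenSeq z m (i + 1) + eigenSeq z m i - eigenSeq z (m + 1) i / z := by
  rw [eigenSeq]

lemma downOp_eigenSeq {z : K} (hz : z ≠ 0) (m : ℕ) :
    downOp z (eigenSeq z m) = (z - 1) • ∑ k ∈ range m, eigenSeq z k := by
  induction m with
  | zero =>
    ext i
    simp only [downOp_apply, range_zero, sum_empty, smul_zero, Pi.zero_apply]
    rw [eigenSeq]
    field_simp
    ring
  | succ m ih =>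
    ext i
    have := congrFun ih i
    simp only [downOp_apply, Pi.smul_apply, smul_eq_mul] at this
    rw [sum_range_succ, smul_add]
    simp only [downOp_apply, Pi.add_apply, Pi.smul_apply, smul_eq_mul]
    rw [← this, eigenSeq_succ_succ]
    field_simp
    ring

lemma shiftBy_one_eigenSeq {z : K} (hz : z ≠ 0) (m : ℕ) :
    shiftBy K 1 (eigenSeq z m) =
      z⁻¹ • ((z - 1) • ∑ k ∈ range m, eigenSeq z k - eigenSeq z m) := by
  rw [← downOp_eigenSeq hz]
  ext i
  simp only [downOp_apply, Pi.smul_apply, smul_eq_mul, Pi.sub_apply, shiftBy_apply]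
  field_simp
  ring

lemma wrapOp_eigenSeq {z : K} (hz : z ≠ 0) {F : (ℕ → K) →ₗ[K] (ℕ → K)} {w : ℕ → K}
    (hF : ∀ m, F (eigenSeq z m) = w m • eigenSeq z m) (m : ℕ) :
    wrapOp z F (eigenSeq z m) = ((z - 1) * ∑ k ∈ range m, w k) • eigenSeq z m := by
  have hdown : ∀ m, F (downOp z (eigenSeq z m)) =
      (z - 1) • ∑ k ∈ range m, w k • eigenSeq z k := by
    intro m
    rw [downOp_eigenSeq hz, map_smul, map_sum]
    simp only [hF]
  ext i
  induction i generalizing m with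
  | zero =>
    rw [wrapOp_zero, hdown]
    simp [eigenSeq_zero, sum_mul, mul_assoc]
  | succ i ih =>
    have key : ∀ m, wrapOp z F (eigenSeq z m) (i + 1) =
        z⁻¹ * ((z - 1) * ∑ k ∈ range m, ((z - 1) * ∑ k ∈ range k, w k) * eigenSeq z k i -
          ((z - 1) * ∑ k ∈ range m, w k) * eigenSeq z m i) +
        (z - 1) * ∑ k ∈ range m, w k * (eigenSeq z k (i + 1) + eigenSeq z k i) := by
      intro m
      rw [wrapOp_succ, shiftBy_one_eigenSeq hz, hdown]
      simp only [map_smul, map_sub, map_sum, Pi.smul_apply, Pi.sub_apply, Finset.sum_apply,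
        smul_eq_mul, ih, mul_add, sum_add_distrib]
    rw [key]
    clear key ih hdown hF
    induction m with
    | zero => simp
    | succ m ih =>
      simp only [Pi.smul_apply, smul_eq_mul] at ih ⊢
      rw [sum_range_succ, sum_range_succ, sum_range_succ, eigenSeq_succ_succ]
      linear_combination (exp := 1) ih + ((z - 1) * (∑ k ∈ range m, w k) * eigenSeq z m i) *
        (mul_inv_cancel₀ hz)

/-- The iterated differences of `eigenSeq z` in its first index. -/
def eigenDiff (z : K) : ℕ → ℕ → ℕ → K
  | 0, m => eigenSeq z m
  | k + 1, m => eigenDiff z k (m + 1) - eigenDiff z k m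

lemma eigenDiff_succ_zero (z : K) (k m : ℕ) : eigenDiff z (k + 1) m 0 = 0 := by
  induction k generalizing m with
  | zero => simp [eigenDiff, eigenSeq_zero]
  | succ k ih =>
    rw [eigenDiff, Pi.sub_apply, ih, ih, sub_zero]

lemma eigenDiff_succ_succ (z : K) (k m i : ℕ) : eigenDiff z (k + 1) m (i + 1) =
    eigenDiff z k m i - eigenDiff z k (m + 1) i / z := by
  induction k generalizing m with
  | zero =>
    simp only [eigenDiff, Pi.sub_apply]
    rw [eigenSeq_succ_succ]
    ring
  | succ k ih =>
    rw [eigenDiff, Pi.sub_apply, ih, ih, eigenDiff, eigenDiff]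
    simp only [Pi.sub_apply]
    ring

lemma eigenDiff_eq_zero (z : K) {k i : ℕ} (hi : i < k) (m : ℕ) : eigenDiff z k m i = 0 := by
  induction k generalizing m i with
  | zero => omega
  | succ k ih =>
    cases i with
    | zero => exact eigenDiff_succ_zero z k m
    | succ i => rw [eigenDiff_succ_succ, ih (by omega), ih (by omega)]; simp

lemma eigenDiff_self (z : K) (k m : ℕ) : eigenDiff z k m k = (1 - z⁻¹) ^ k * z⁻¹ := by
  induction k generalizing m with
  | zero => simp [eigenDiff, eigenSeq_zero]
  | succ k ih => rw [eigenDiff_succ_succ, ih, ih]; ring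

lemma eigenDiff_mem_span (z : K) (k m : ℕ) :
    eigenDiff z k m ∈ Submodule.span K (Set.range (eigenSeq z)) := by
  induction k generalizing m with
  | zero => exact Submodule.subset_span ⟨m, rfl⟩
  | succ k ih => exact Submodule.sub_mem _ (ih _) (ih _)

lemma exists_mem_span_eigenSeq {z : K} (hz : z ≠ 0) (hz1 : z ≠ 1) (f : ℕ → K) (d : ℕ) :
    ∃ g ∈ Submodule.span K (Set.range (eigenSeq z)), ∀ i < d, g i = f i := by
  induction d with
  | zero => exact ⟨0, Submodule.zero_mem _, fun i hi => by omega⟩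
  | succ d ih =>
    obtain ⟨g, hg, hgf⟩ := ih
    have hne : eigenDiff z d 0 d ≠ 0 := by
      rw [eigenDiff_self]
      refine mul_ne_zero (pow_ne_zero _ ?_) (inv_ne_zero hz)
      rw [sub_ne_zero]
      exact fun h => hz1 (by rw [← inv_inv z, ← h, inv_one])
    refine ⟨g + ((f d - g d) / eigenDiff z d 0 d) • eigenDiff z d 0,
      Submodule.add_mem _ hg (Submodule.smul_mem _ _ (eigenDiff_mem_span z d 0)), ?_⟩
    intro i hi
    simp only [Pi.add_apply, Pi.smul_apply, smul_eq_mul]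
    rcases Nat.lt_succ_iff_lt_or_eq.mp hi with h | rfl
    · rw [eigenDiff_eq_zero z h, mul_zero, add_zero, hgf i h]
    · rw [div_mul_cancel₀ _ hne]
      ring

/-- `F` has bandwidth `d`: the value of `F f` at `i` only depends on `f` up to `i + d`. -/
def HasBand (d : ℕ) (F : (ℕ → K) →ₗ[K] (ℕ → K)) : Prop :=
  ∀ i f g, (∀ j ≤ i + d, f j = g j) → F f i = F g i

lemma hasBand_id : HasBand 0 (LinearMap.id : (ℕ → K) →ₗ[K] (ℕ → K)) :=
  fun i _ _ h => h i le_rfl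

lemma HasBand.comp {d e : ℕ} {F G : (ℕ → K) →ₗ[K] (ℕ → K)} (hF : HasBand d F)
    (hG : HasBand e G) : HasBand (d + e) (F ∘ₗ G) :=
  fun i f g h => hF i _ _ fun j hj => hG j _ _ fun k hk => h k (by omega)

lemma HasBand.wrapOp (z : K) {d : ℕ} {F : (ℕ → K) →ₗ[K] (ℕ → K)} (hF : HasBand d F) :
    HasBand (d + 1) (wrapOp z F) := by
  intro i f g h
  have key : ∀ t ≤ i, ∀ k ≤ i - t, F (downOp z (shiftBy K t f)) k =
      F (downOp z (shiftBy K t g)) k := by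
    intro t ht k hk
    refine hF k _ _ fun j hj => ?_
    simp only [downOp_apply, shiftBy_apply]
    rw [h _ (by omega), h _ (by omega)]
  rw [wrapOp_apply, wrapOp_apply]
  refine sum_congr rfl fun t ht => ?_
  have ht' : t ≤ i := Nat.lt_succ_iff.mp (mem_range.mp ht)
  rcases Nat.eq_zero_or_pos (i - t) with h0 | h0
  · rw [h0, upOp_zero, upOp_zero, key t ht' 0 (by omega)]
  · obtain ⟨k, hk⟩ := Nat.exists_eq_succ_of_ne_zero h0.ne'
    rw [hk, Nat.succ_eq_add_one, upOp_succ, upOp_succ, key t ht' _ (by omega),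
      key t ht' _ (by omega)]

lemma HasBand.eq_of_eigenvalues_eq {z : K} (hz : z ≠ 0) (hz1 : z ≠ 1) {d e : ℕ}
    {F G : (ℕ → K) →ₗ[K] (ℕ → K)} (hF : HasBand d F) (hG : HasBand e G)
    (h : ∀ m, F (eigenSeq z m) = G (eigenSeq z m)) : F = G := by
  ext1 f
  ext i
  obtain ⟨g, hg, hgf⟩ := exists_mem_span_eigenSeq hz hz1 f (i + d + e + 1)
  have hFG : F g = G g :=
    LinearMap.eqOn_span (by rintro _ ⟨m, rfl⟩; exact h m) hg
  rw [← hF i g f fun j hj => hgf j (by omega), hFG, hG i g f fun j hj => hgf j (by omega)]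

end Operators

/-! ### Partition functions of codes of tilings

A cover-inclusive tiling above `λ` is encoded by the number `c` of boxes in each column together
with the number `t` of tiles crossing each step of `λ`.  Reading `λ` from left to right, `floor h`
is the number of tiles crossing the innermost open chord when the current height is `h`. -/

section PartitionFunction

/-- The admissible pairs `(t, d)` for a step at height `h` starting in a column with `c` boxes:
`t` tiles cross the step, and the next column has `d` boxes. -/
def stepChoices (b : Bool) (h : ℕ) (floor : ℕ → ℕ) (c : ℕ) : Finset (ℕ × ℕ) :=
  if b then ((Icc (floor h) c) ×ˢ (Icc (c - 1) c)).filter fun p => p.1 ≤ p.2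
  else ({floor h} ×ˢ Icc c (c + 1)).filter fun p => p.1 ≤ c

/-- The height after a step. -/
def nextHt (b : Bool) (h : ℕ) : ℕ := if b then h + 1 else h - 1

/-- The floor function after a step crossed by `t` tiles. -/
def nextFloor (b : Bool) (h : ℕ) (floor : ℕ → ℕ) (t : ℕ) : ℕ → ℕ :=
  if b then Function.update floor (h + 1) t else floor

/-- The codes of the tilings over a word of steps. -/
def codes : List Bool → ℕ → (ℕ → ℕ) → ℕ → Finset (List (ℕ × ℕ))
  | [], _, _, c => if c = 0 then {[]} else ∅
  | b :: L, h, floor, c => (stepChoices b h floor c).biUnion fun p =>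
      (codes L (nextHt b h) (nextFloor b h floor p.1) p.2).image (List.cons p)

/-- The discrepancy read off from a code. -/
def codeDis : List Bool → ℕ → List (ℕ × ℕ) → ℕ
  | b :: L, c, p :: d => (if b = false ∧ p.2 = c + 1 then 1 else 0) + codeDis L p.2 d
  | _, _, _ => 0

variable {K : Type*}

/-- The generating function of codes by discrepancy. -/
def partFun [CommSemiring K] (z : K) : List Bool → ℕ → (ℕ → ℕ) → ℕ → K
  | [], _, _, c => if c = 0 then 1 else 0
  | b :: L, h, floor, c => ∑ p ∈ stepChoices b h floor c,
      (if b = false ∧ p.2 = c + 1 then z else 1) *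
        partFun z L (nextHt b h) (nextFloor b h floor p.1) p.2

lemma sum_codes [CommSemiring K] (z : K) (L : List Bool) (h : ℕ) (floor : ℕ → ℕ) (c : ℕ) :
    ∑ d ∈ codes L h floor c, z ^ codeDis L c d = partFun z L h floor c := by
  induction L generalizing h floor c with
  | nil => by_cases hc : c = 0 <;> simp [codes, partFun, codeDis, hc]
  | cons b L ih =>
    rw [codes, partFun, sum_biUnion]
    · refine sum_congr rfl fun p _ => ?_
      rw [sum_image fun _ _ _ _ hxy => (List.cons.inj hxy).2, ← ih, mul_sum]
      refine sum_congr rfl fun d _ => ?_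
      rw [codeDis, pow_add]
      split_ifs <;> simp
    · intro p _ q _ hpq
      rw [Function.onFun, disjoint_left]
      intro d hd hd'
      obtain ⟨d₁, _, rfl⟩ := mem_image.mp hd
      obtain ⟨d₂, _, h₂⟩ := mem_image.mp hd'
      exact hpq (List.cons.inj h₂).1.symm

lemma partFun_congr [CommSemiring K] (z : K) (L : List Bool) {h : ℕ} {floor floor' : ℕ → ℕ}
    (hf : ∀ k ≤ h, floor k = floor' k) (c : ℕ) :
    partFun z L h floor c = partFun z L h floor' c := by
  induction L generalizing h floor floor' c with
  | nil => rfl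
  | cons b L ih =>
    have hch : stepChoices b h floor c = stepChoices b h floor' c := by
      simp only [stepChoices, hf h le_rfl]
    rw [partFun, partFun, hch]
    refine sum_congr rfl fun p _ => ?_
    congr 1
    refine ih (fun k hk => ?_) _
    cases b
    · exact hf k (by simp only [nextHt, Bool.false_eq_true, if_false] at hk; omega)
    · simp only [nextHt, if_true] at hk
      simp only [nextFloor, if_true, Function.update_apply]
      split_ifs with hk'
      · rfl
      · exact hf k (by omega)

variable [Field K]

/-- `F` is the transfer operator from the word `L` to its suffix `M`. -/
def IsTransfer (z : K) (L M : List Bool) (F : (ℕ → K) →ₗ[K] (ℕ → K)) : Prop :=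
  ∀ (h : ℕ) (floor : ℕ → ℕ) (c : ℕ), floor h ≤ c →
    partFun z L h floor c = F (fun j => partFun z M h floor (j + floor h)) (c - floor h)

lemma isTransfer_id (z : K) (L : List Bool) : IsTransfer z L L LinearMap.id := by
  intro h floor c hc
  simp [Nat.sub_add_cancel hc]

lemma IsTransfer.comp {z : K} {L M N : List Bool} {F G : (ℕ → K) →ₗ[K] (ℕ → K)}
    (hF : IsTransfer z L M F) (hG : IsTransfer z M N G) : IsTransfer z L N (F ∘ₗ G) := by
  intro h floor c hc
  rw [hF h floor c hc, LinearMap.comp_apply]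
  refine congrFun (congrArg F (funext fun j => ?_)) _
  rw [hG h floor _ (Nat.le_add_left _ _), Nat.add_sub_cancel]

lemma partFun_false_cons (z : K) (M : List Bool) (h : ℕ) (floor : ℕ → ℕ) (c : ℕ)
    (hc : floor (h + 1) ≤ c) : partFun z (false :: M) (h + 1) floor c =
      partFun z M h floor c + z * partFun z M h floor (c + 1) := by
  have hch : stepChoices false (h + 1) floor c =
      {(floor (h + 1), c), (floor (h + 1), c + 1)} := by
    ext ⟨a, b⟩
    simp only [stepChoices, Bool.false_eq_true, if_false, mem_filter, mem_product,
      mem_singleton, mem_Icc, mem_insert, Prod.mk.injEq]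
    omega
  rw [partFun, hch, sum_pair (by simp)]
  simp [nextHt, nextFloor]

lemma partFun_true_cons (z : K) (L : List Bool) (h : ℕ) (floor : ℕ → ℕ) (c : ℕ) :
    partFun z (true :: L) h floor c = ∑ t ∈ Icc (floor h) c,
      (partFun z L (h + 1) (Function.update floor (h + 1) t) c +
        if t = c then 0 else partFun z L (h + 1) (Function.update floor (h + 1) t) (c - 1)) := by
  rw [partFun, stepChoices, if_pos rfl, sum_filter, sum_product]
  refine sum_congr rfl fun t ht => ?_
  obtain ⟨_, htc⟩ := mem_Icc.mp ht
  simp only [nextHt, nextFloor, if_true, Bool.true_eq_false, false_and, if_false, one_mul]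
  rcases Nat.eq_zero_or_pos c with rfl | hc
  · simp [Nat.le_zero.mp htc]
  · have : Icc (c - 1) c = {c, c - 1} := by
      ext a
      simp only [mem_Icc, mem_insert, mem_singleton]
      omega
    rw [this, sum_pair (by omega), if_pos htc]
    congr 1
    by_cases h1 : t = c
    · rw [if_neg (by omega), if_pos h1]
    · rw [if_pos (by omega), if_neg h1]

lemma IsTransfer.wrapOp {z : K} {L M : List Bool} {F : (ℕ → K) →ₗ[K] (ℕ → K)}
    (hF : IsTransfer z L (false :: M) F) : IsTransfer z (true :: L) M (wrapOp z F) := by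
  intro h floor c hc
  have key : ∀ t c', t ≤ c' →
      partFun z L (h + 1) (Function.update floor (h + 1) t) c' =
        F (downOp z (shiftBy K t (partFun z M h floor))) (c' - t) := by
    intro t c' htc
    have := hF (h + 1) (Function.update floor (h + 1) t) c' (by simpa using htc)
    rw [Function.update_self] at this
    rw [this]
    refine congrFun (congrArg F (funext fun j => ?_)) _
    rw [partFun_false_cons _ _ _ _ _ (by simp), downOp_apply, shiftBy_apply, shiftBy_apply]
    have hcongr := fun c => partFun_congr z M (h := h)
      (floor := Function.update floor (h + 1) t) (floor' := floor)
      (fun k hk => Function.update_of_ne (by omega) _ _) c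
    rw [hcongr, hcongr, Nat.add_right_comm]
  have hIcc : Icc (floor h) c = Ico (floor h) (c + 1) := by
    ext t
    simp only [mem_Icc, mem_Ico]
    omega
  rw [partFun_true_cons, wrapOp_apply, hIcc, sum_Ico_eq_sum_range, Nat.sub_add_comm hc]
  refine sum_congr rfl fun t ht => ?_
  rw [mem_range] at ht
  have ht' : floor h + t ≤ c := by omega
  have hshift : shiftBy K t (fun j => partFun z M h floor (j + floor h)) =
      shiftBy K (floor h + t) (partFun z M h floor) := by
    ext j
    simp only [shiftBy_apply]
    congr 1
    omega
  rw [hshift, key _ _ ht', Nat.sub_sub]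
  by_cases h1 : floor h + t = c
  · rw [if_pos h1, h1, Nat.sub_self, upOp_zero, add_zero]
  · obtain ⟨k, hk⟩ := Nat.exists_eq_add_of_lt (lt_of_le_of_ne ht' h1)
    rw [if_neg h1, key _ _ (by omega), show c - (floor h + t) = k + 1 by omega,
      show c - 1 - (floor h + t) = k by omega, upOp_succ]

end PartitionFunction

/-! ### Counting strict order-preserving maps -/

section StrictMaps

variable {α : Type*} [Fintype α] [DecidableEq α]

open Classical in
/-- The maps `S → {0, …, m - 1}` (extended by `0`) that are strictly increasing along `R`. -/
def strictMaps (R : α → α → Prop) (S : Finset α) (m : ℕ) : Finset (α → ℕ) :=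
  (Fintype.piFinset fun i => if i ∈ S then range m else {0}).filter fun g : α → ℕ =>
    ∀ i ∈ S, ∀ j ∈ S, R i j → g i < g j

lemma mem_strictMaps {R : α → α → Prop} {S : Finset α} {m : ℕ} {g : α → ℕ} :
    g ∈ strictMaps R S m ↔ (∀ i ∈ S, g i < m) ∧ (∀ i ∉ S, g i = 0) ∧
      ∀ i ∈ S, ∀ j ∈ S, R i j → g i < g j := by
  classical
  rw [strictMaps, mem_filter, Fintype.mem_piFinset, ← and_assoc]
  refine and_congr_left fun _ => ⟨fun h => ⟨fun i hi => ?_, fun i hi => ?_⟩, fun h i => ?_⟩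
  · simpa [hi] using h i
  · simpa [hi] using h i
  · by_cases hi : i ∈ S
    · simpa [hi] using h.1 i hi
    · simpa [hi] using h.2 i hi

lemma strictMaps_congr {R R' : α → α → Prop} (h : ∀ i j, R i j ↔ R' i j) (S : Finset α)
    (m : ℕ) : strictMaps R S m = strictMaps R' S m := by
  ext g
  simp only [mem_strictMaps, h]

lemma card_strictMaps_empty (R : α → α → Prop) (m : ℕ) : (strictMaps R ∅ m).card = 1 := by
  rw [card_eq_one]
  refine ⟨0, ?_⟩
  ext g
  simp [mem_strictMaps, funext_iff]

lemma card_strictMaps_insert {R : α → α → Prop} {S : Finset α} {i₀ : α} (hi₀ : i₀ ∉ S)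
    (htop : ∀ i ∈ S, R i i₀) (hnot : ∀ i ∈ S, ¬ R i₀ i) (hirr : ¬ R i₀ i₀) (m : ℕ) :
    (strictMaps R (insert i₀ S) m).card = ∑ k ∈ range m, (strictMaps R S k).card := by
  have hne : ∀ i ∈ S, i ≠ i₀ := fun i hi h => hi₀ (h ▸ hi)
  rw [card_eq_sum_card_fiberwise (f := fun g => g i₀) (t := range m)]
  · refine sum_congr rfl fun k hk => ?_
    refine card_nbij' (fun g => Function.update g i₀ 0) (fun g => Function.update g i₀ k)
      ?_ ?_ ?_ ?_
    · intro g hg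
      obtain ⟨hg', rfl⟩ := mem_filter.mp hg
      obtain ⟨_, h2, h3⟩ := mem_strictMaps.mp hg'
      dsimp only
      refine mem_strictMaps.mpr ⟨fun i hi => ?_, fun i hi => ?_, fun i hi j hj hij => ?_⟩
      · rw [Function.update_of_ne (hne i hi)]
        exact h3 i (mem_insert_of_mem hi) i₀ (mem_insert_self _ _) (htop i hi)
      · by_cases h : i = i₀
        · simp [h]
        · rw [Function.update_of_ne h]
          exact h2 i (by simp [h, hi])
      · rw [Function.update_of_ne (hne i hi), Function.update_of_ne (hne j hj)]
        exact h3 i (mem_insert_of_mem hi) j (mem_insert_of_mem hj) hij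
    · intro g hg
      obtain ⟨h1, h2, h3⟩ := mem_strictMaps.mp hg
      have hkm := mem_range.mp hk
      dsimp only
      refine mem_filter.mpr ⟨mem_strictMaps.mpr ⟨fun i hi => ?_, fun i hi => ?_,
        fun i hi j hj hij => ?_⟩, by simp⟩
      · rcases mem_insert.mp hi with rfl | hi
        · simpa using hkm
        · rw [Function.update_of_ne (hne i hi)]
          exact (h1 i hi).trans hkm
      · rw [mem_insert, not_or] at hi
        rw [Function.update_of_ne hi.1]
        exact h2 i hi.2
      · rcases mem_insert.mp hi with rfl | hi' <;> rcases mem_insert.mp hj with rfl | hj'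
        · exact absurd hij hirr
        · exact absurd hij (hnot j hj')
        · rw [Function.update_of_ne (hne i hi'), Function.update_self]
          exact h1 i hi'
        · rw [Function.update_of_ne (hne i hi'), Function.update_of_ne (hne j hj')]
          exact h3 i hi' j hj' hij
    · intro g hg
      obtain ⟨hg, rfl⟩ := mem_filter.mp hg
      simp
    · intro g hg
      have := (mem_strictMaps.mp hg).2.1 i₀ hi₀
      simp [← this]
  · intro g hg
    exact mem_coe.mpr (mem_range.mpr ((mem_strictMaps.mp hg).1 i₀ (mem_insert_self _ _)))

lemma card_strictMaps_union {R : α → α → Prop} {A B : Finset α} (hAB : Disjoint A B)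
    (h₁ : ∀ i ∈ A, ∀ j ∈ B, ¬ R i j) (h₂ : ∀ i ∈ A, ∀ j ∈ B, ¬ R j i) (m : ℕ) :
    (strictMaps R (A ∪ B) m).card = (strictMaps R A m).card * (strictMaps R B m).card := by
  rw [← card_product]
  have hBA : ∀ i ∈ B, i ∉ A := fun i hB hA => disjoint_left.mp hAB hA hB
  have hAB' : ∀ i ∈ A, i ∉ B := fun i hA hB => disjoint_left.mp hAB hA hB
  refine card_nbij' (fun g => (fun i => if i ∈ A then g i else 0, fun i => if i ∈ B then g i else 0))
    (fun g i => g.1 i + g.2 i) ?_ ?_ ?_ ?_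
  · intro g hg
    obtain ⟨h1, h2, h3⟩ := mem_strictMaps.mp hg
    refine mem_product.mpr ⟨mem_strictMaps.mpr ⟨fun i hi => ?_, fun i hi => ?_,
      fun i hi j hj hij => ?_⟩, mem_strictMaps.mpr ⟨fun i hi => ?_, fun i hi => ?_,
      fun i hi j hj hij => ?_⟩⟩
    · simpa [hi] using h1 i (mem_union_left _ hi)
    · simp [hi]
    · simpa [hi, hj] using h3 i (mem_union_left _ hi) j (mem_union_left _ hj) hij
    · simpa [hi] using h1 i (mem_union_right _ hi)
    · simp [hi]
    · simpa [hi, hj] using h3 i (mem_union_right _ hi) j (mem_union_right _ hj) hij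
  · intro g hg
    obtain ⟨hg1, hg2⟩ := mem_product.mp hg
    obtain ⟨a1, a2, a3⟩ := mem_strictMaps.mp hg1
    obtain ⟨b1, b2, b3⟩ := mem_strictMaps.mp hg2
    refine mem_strictMaps.mpr ⟨fun i hi => ?_, fun i hi => ?_, fun i hi j hj hij => ?_⟩
    · rcases mem_union.mp hi with hi | hi
      · simpa [b2 i (hAB' i hi)] using a1 i hi
      · simpa [a2 i (hBA i hi)] using b1 i hi
    · rw [mem_union, not_or] at hi
      simp [a2 i hi.1, b2 i hi.2]
    · rcases mem_union.mp hi with hi | hi <;> rcases mem_union.mp hj with hj | hj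
      · simpa [b2 i (hAB' i hi), b2 j (hAB' j hj)] using a3 i hi j hj hij
      · exact absurd hij (h₁ i hi j hj)
      · exact absurd hij (h₂ j hj i hi)
      · simpa [a2 i (hBA i hi), a2 j (hBA j hj)] using b3 i hi j hj hij
  · intro g hg
    obtain ⟨_, h2, _⟩ := mem_strictMaps.mp hg
    ext i
    by_cases hA : i ∈ A
    · simp [hA, hAB' i hA]
    · by_cases hB : i ∈ B
      · simp [hA, hB]
      · simp [hA, hB, h2 i]
  · intro g hg
    obtain ⟨hg1, hg2⟩ := mem_product.mp hg
    obtain ⟨_, a2, _⟩ := mem_strictMaps.mp hg1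
    obtain ⟨_, b2, _⟩ := mem_strictMaps.mp hg2
    refine Prod.ext (funext fun i => ?_) (funext fun i => ?_)
    · by_cases hA : i ∈ A
      · simp [hA, b2 i (hAB' i hA)]
      · simp [hA, a2 i hA]
    · by_cases hB : i ∈ B
      · simp [hB, a2 i (hBA i hB)]
      · simp [hB, b2 i hB]

end StrictMaps

/-! ### Heights of Dyck paths -/

namespace DyckPath

variable {n : ℕ} (P : DyckPath n)

/-- The steps of a Dyck path, indexed by natural numbers. -/
def isUp (s : ℕ) : Bool := if h : s < 2 * n then P.step ⟨s, h⟩ else false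

lemma isUp_eq {s : ℕ} (hs : s < 2 * n) : P.isUp s = P.step ⟨s, hs⟩ := dif_pos hs

lemma pt_eq (k : ℕ) : P.pt k =
    ((univ.filter fun i : Fin (2 * n) => (i : ℕ) < k ∧ P.step i = true).card : ℤ) -
      (univ.filter fun i : Fin (2 * n) => (i : ℕ) < k ∧ P.step i = false).card := by
  simp [pt, ht]

lemma pt_zero : P.pt 0 = 0 := by simp [pt_eq]

lemma pt_nonneg {k : ℕ} (hk : k ≤ 2 * n) : 0 ≤ P.pt k := by
  rw [pt_eq]
  have := P.nonneg k hk
  omega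

lemma card_filter_lt_succ {s : ℕ} (hs : s < 2 * n) (b : Bool) :
    (univ.filter fun i : Fin (2 * n) => (i : ℕ) < s + 1 ∧ P.step i = b).card =
      (univ.filter fun i : Fin (2 * n) => (i : ℕ) < s ∧ P.step i = b).card +
        if P.isUp s = b then 1 else 0 := by
  rw [isUp_eq P hs]
  split_ifs with h
  · rw [← card_insert_of_notMem (a := ⟨s, hs⟩) (by simp)]
    congr 1
    ext i
    simp only [mem_filter, mem_univ, true_and, mem_insert, Fin.ext_iff]
    constructor
    · rintro ⟨h1, h2⟩
      by_cases h3 : (i : ℕ) = s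
      · exact Or.inl h3
      · exact Or.inr ⟨by omega, h2⟩
    · rintro (h1 | ⟨h1, h2⟩)
      · refine ⟨by omega, ?_⟩
        rw [← h]
        congr 1
        exact Fin.ext h1
      · exact ⟨by omega, h2⟩
  · rw [add_zero]
    congr 1
    ext i
    simp only [mem_filter, mem_univ, true_and]
    refine ⟨fun ⟨h1, h2⟩ => ⟨?_, h2⟩, fun ⟨h1, h2⟩ => ⟨by omega, h2⟩⟩
    by_contra h3
    refine h (h2 ▸ ?_)
    congr 1
    exact Fin.ext (by simp only; omega)

lemma pt_succ {s : ℕ} (hs : s < 2 * n) :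
    P.pt (s + 1) = P.pt s + if P.isUp s = true then 1 else -1 := by
  rw [pt_eq, pt_eq, card_filter_lt_succ P hs, card_filter_lt_succ P hs]
  cases P.isUp s <;> simp <;> ring

lemma pt_succ_of_up {s : ℕ} (hs : s < 2 * n) (h : P.isUp s = true) :
    P.pt (s + 1) = P.pt s + 1 := by simp [pt_succ P hs, h]

lemma pt_succ_of_down {s : ℕ} (hs : s < 2 * n) (h : P.isUp s = false) :
    P.pt (s + 1) = P.pt s - 1 := by simp [pt_succ P hs, h]; ring

lemma pt_two_mul : P.pt (2 * n) = 0 := by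
  have h1 := P.balanced
  have h2 := card_filter_add_card_filter_not (s := (univ : Finset (Fin (2 * n))))
    (fun i => P.step i = true)
  simp only [Bool.not_eq_true, card_univ, Fintype.card_fin] at h2
  rw [pt_eq]
  simp only [Fin.is_lt, true_and]
  omega

lemma pt_le (k : ℕ) : P.pt k ≤ n := by
  have h1 := P.balanced
  have h2 : (univ.filter fun i : Fin (2 * n) => (i : ℕ) < k ∧ P.step i = true).card ≤
      (univ.filter fun i : Fin (2 * n) => P.step i = true).card :=
    card_le_card fun i => by simp +contextual
  rw [pt_eq]
  omega

lemma pt_emod_two {k : ℕ} (hk : k ≤ 2 * n) : P.pt k % 2 = (k : ℤ) % 2 := by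
  induction k with
  | zero => simp [pt_zero]
  | succ k ih =>
    have := ih (by omega)
    have h2 := pt_succ P (s := k) (by omega)
    push_cast
    split_ifs at h2 <;> omega

lemma ht_eq_pt {x : ℤ} {k : ℕ} (h : x + n = k) : P.ht x = P.pt k := by
  rw [pt, show x = k - n by omega]

lemma ht_eq_zero_of_neg {x : ℤ} (h : x + n < 0) : P.ht x = 0 := by
  have : ∀ i : Fin (2 * n), ¬ (((i : ℕ) : ℤ) < x + n) := fun i => by omega
  simp [ht, this]

lemma ht_eq_zero_of_gt {x : ℤ} (h : n ≤ x) : P.ht x = 0 := by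
  rw [← pt_two_mul P, pt, ht, ht]
  have h1 : ∀ i : Fin (2 * n), (((i : ℕ) : ℤ) < x + n) := fun i => by omega
  have h2 : ∀ i : Fin (2 * n), (((i : ℕ) : ℤ) < ((2 * n : ℕ) : ℤ) - n + n) := fun i => by omega
  simp only [h1, h2]

/-- Two Dyck paths with equal heights are equal. -/
lemma ext_pt {P Q : DyckPath n} (h : ∀ k ≤ 2 * n, P.pt k = Q.pt k) : P = Q := by
  have hstep : P.step = Q.step := by
    ext ⟨s, hs⟩
    rw [← isUp_eq P hs, ← isUp_eq Q hs]
    have h1 := pt_succ P hs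
    have h2 := pt_succ Q hs
    rw [h s hs.le, h (s + 1) hs, h2] at h1
    cases hP : P.isUp s <;> cases hQ : Q.isUp s <;> simp_all
  cases P
  cases Q
  simp only at hstep
  subst hstep
  rfl

/-- The word of steps of a Dyck path. -/
def word : List Bool := List.ofFn P.step

lemma drop_word {s : ℕ} (hs : s < 2 * n) :
    P.word.drop s = P.isUp s :: P.word.drop (s + 1) := by
  rw [List.drop_eq_getElem_cons (by simpa [word] using hs), isUp_eq P hs]
  simp [word]

lemma drop_word_two_mul : P.word.drop (2 * n) = [] := by simp [word]

end DyckPath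

/-! ### The transfer operator of a Dyck path -/

section Transfer

variable {n : ℕ} {P : DyckPath n} (C : ChordLabeling P)

/-- The labels of the chords whose up step lies in `[x, y)`. -/
def chordsIn (x y : ℕ) : Finset (Fin n) := univ.filter fun i => x ≤ C.l i ∧ C.l i < y

/-- The nesting relation: the chord labeled `i` is strictly inside the one labeled `j`. -/
def ChordLabeling.Inside (i j : Fin n) : Prop := C.l j < C.l i ∧ C.r i < C.r j

lemma mem_chordsIn {x y : ℕ} {i : Fin n} : i ∈ chordsIn C x y ↔ x ≤ C.l i ∧ C.l i < y := by
  simp [chordsIn]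

lemma ChordLabeling.l_lt (i : Fin n) : C.l i < 2 * n := (C.chord i).1.trans (C.chord i).2.1

lemma ChordLabeling.isUp_l (i : Fin n) : P.isUp (C.l i) = true := by
  obtain ⟨hp, h⟩ := (C.chord i).2.2.1
  rw [P.isUp_eq hp, h]

lemma ChordLabeling.isUp_r (i : Fin n) : P.isUp (C.r i) = false := by
  obtain ⟨hp, h⟩ := (C.chord i).2.2.2.1
  rw [P.isUp_eq hp, h]

lemma ChordLabeling.exists_l_eq {s : ℕ} (hs : s < 2 * n) (hup : P.isUp s = true) :
    ∃ i, C.l i = s := by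
  have himg : univ.image (fun i => (⟨C.l i, C.l_lt i⟩ : Fin (2 * n))) =
      univ.filter fun k => P.step k = true := by
    refine eq_of_subset_of_card_le (fun k hk => ?_) ?_
    · obtain ⟨i, _, rfl⟩ := mem_image.mp hk
      have := C.isUp_l i
      rw [P.isUp_eq (C.l_lt i)] at this
      simpa using this
    · rw [P.balanced, card_image_of_injective _ fun i j hij => C.inj (Fin.mk.inj hij)]
      simp
  have hmem : (⟨s, hs⟩ : Fin (2 * n)) ∈ univ.filter fun k => P.step k = true := by
    rw [P.isUp_eq hs] at hup
    simpa using hup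
  rw [← himg] at hmem
  obtain ⟨i, _, hi⟩ := mem_image.mp hmem
  exact ⟨i, Fin.mk.inj hi⟩

lemma exists_transfer {K : Type*} [Field K] {z : K} (hz : z ≠ 0) (x y : ℕ) (hxy : x ≤ y)
    (hy : y ≤ 2 * n) (hpt : P.pt x = P.pt y) (hmin : ∀ s, x ≤ s → s ≤ y → P.pt x ≤ P.pt s) :
    ∃ (F : (ℕ → K) →ₗ[K] (ℕ → K)) (d : ℕ), HasBand d F ∧
      IsTransfer z (P.word.drop x) (P.word.drop y) F ∧
      ∀ m, F (eigenSeq z m) = ((z - 1) ^ (chordsIn C x y).card *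
        ((strictMaps C.Inside (chordsIn C x y) m).card : K)) • eigenSeq z m := by
  induction hk : y - x using Nat.strong_induction_on generalizing x y with
  | _ k ih =>
  rcases hxy.eq_or_lt with rfl | hlt
  · refine ⟨LinearMap.id, 0, hasBand_id, isTransfer_id z _, fun m => ?_⟩
    have : chordsIn C x x = ∅ := by
      ext i
      simp [mem_chordsIn]
    simp [this, card_strictMaps_empty]
  · have hx : x < 2 * n := by omega
    have hup : P.isUp x = true := by
      by_contra h
      have h1 := P.pt_succ_of_down hx (by simpa using h)
      have h2 := hmin (x + 1) (by omega) (by omega)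
      omega
    obtain ⟨i₀, hi₀⟩ := C.exists_l_eq hx hup
    obtain ⟨hlq, hq, -, -, hqpt, hqgt⟩ := C.chord i₀
    have hdown := C.isUp_r i₀
    rw [hi₀] at hlq hqpt hqgt
    generalize hqdef : C.r i₀ = q at *
    have hqy : q < y := by
      by_contra h
      have := hqgt y hlt (by omega)
      omega
    have hxs := P.pt_succ_of_up hx hup
    have hqs := P.pt_succ_of_down hq hdown
    obtain ⟨F, d, hF, hFt, hFe⟩ := ih (q - (x + 1)) (by omega) (x + 1) q (by omega) (by omega)
      (by omega) (fun s h1 h2 => by have := hqgt s (by omega) h2; omega) rfl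
    obtain ⟨G, e, hG, hGt, hGe⟩ := ih (y - (q + 1)) (by omega) (q + 1) y (by omega) hy
      (by omega) (fun s h1 h2 => by have := hmin s (by omega) h2; omega) rfl
    refine ⟨wrapOp z F ∘ₗ G, _, (hF.wrapOp z).comp hG, ?_, fun m => ?_⟩
    · rw [P.drop_word hx, hup]
      rw [P.drop_word hq, hdown] at hFt
      exact hFt.wrapOp.comp hGt
    · have hr : ∀ i ∈ chordsIn C (x + 1) q, C.r i < q := by
        intro i hi
        obtain ⟨h1, h2⟩ := (mem_chordsIn C).mp hi
        obtain ⟨-, -, -, -, h3, h4⟩ := C.chord i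
        have h5 := hqgt (C.l i) (by omega) (by omega)
        by_contra h
        rcases eq_or_lt_of_le (not_lt.mp h) with h6 | h6
        · rw [← h6] at h3
          omega
        · have := h4 (q + 1) (by omega) (by omega)
          omega
      have hi₀A : i₀ ∉ chordsIn C (x + 1) q := by
        rw [mem_chordsIn]
        omega
      have hsplit : chordsIn C x y =
          insert i₀ (chordsIn C (x + 1) q) ∪ chordsIn C (q + 1) y := by
        ext i
        simp only [mem_union, mem_insert, mem_chordsIn]
        have h1 : i = i₀ ↔ C.l i = x := by rw [← hi₀]; exact C.inj.eq_iff.symm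
        have h2 : C.l i ≠ q := by
          intro h
          have := C.isUp_l i
          rw [h, hdown] at this
          exact absurd this (by simp)
        rw [h1]
        omega
      have hdisj : Disjoint (insert i₀ (chordsIn C (x + 1) q)) (chordsIn C (q + 1) y) := by
        rw [disjoint_left]
        intro i hi
        rw [mem_chordsIn]
        rcases mem_insert.mp hi with rfl | hi
        · omega
        · rw [mem_chordsIn] at hi
          omega
      have hcross : ∀ i ∈ insert i₀ (chordsIn C (x + 1) q), C.r i ≤ q ∧ C.l i ≤ q := by
        intro i hi
        rcases mem_insert.mp hi with rfl | hi
        · omega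
        · have := hr i hi
          rw [mem_chordsIn] at hi
          omega
      have hlr : ∀ i, C.l i < C.r i := fun i => (C.chord i).1
      rw [hsplit, card_strictMaps_union hdisj, card_strictMaps_insert hi₀A,
        card_union_of_disjoint hdisj, card_insert_of_notMem hi₀A, LinearMap.comp_apply, hGe,
        map_smul, wrapOp_eigenSeq hz hFe, smul_smul]
      · congr 1
        rw [← mul_sum]
        push_cast
        ring
      · intro i hi
        have := hr i hi
        rw [mem_chordsIn] at hi
        exact ⟨by omega, by omega⟩
      · rintro i hi ⟨h1, -⟩
        rw [mem_chordsIn] at hi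
        omega
      · rintro ⟨h1, -⟩
        omega
      · rintro i hi j hj ⟨h1, -⟩
        have := hcross i hi
        rw [mem_chordsIn] at hj
        omega
      · rintro i hi j hj ⟨-, h2⟩
        have := hcross i hi
        have := hlr j
        rw [mem_chordsIn] at hj
        omega

/-- The generating function of codes only depends on the chord poset. -/
lemma partFun_word_eq {K : Type*} [Field K] {z : K} (hz : z ≠ 0) (hz1 : z ≠ 1)
    {P Q : DyckPath n} (C : ChordLabeling P) (D : ChordLabeling Q)
    (h : ∀ i j, C.Inside i j ↔ D.Inside i j) :
    partFun z P.word 0 0 0 = partFun z Q.word 0 0 0 := by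
  have huniv : ∀ {P : DyckPath n} (C : ChordLabeling P), chordsIn C 0 (2 * n) = univ := by
    intro P C
    ext i
    simp [mem_chordsIn, C.l_lt]
  obtain ⟨F, d, hF, hFt, hFe⟩ := exists_transfer C hz 0 (2 * n) (Nat.zero_le _) le_rfl
    (by rw [P.pt_zero, P.pt_two_mul]) (fun s _ hs => by rw [P.pt_zero]; exact P.pt_nonneg hs)
  obtain ⟨G, e, hG, hGt, hGe⟩ := exists_transfer D hz 0 (2 * n) (Nat.zero_le _) le_rfl
    (by rw [Q.pt_zero, Q.pt_two_mul]) (fun s _ hs => by rw [Q.pt_zero]; exact Q.pt_nonneg hs)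
  rw [P.drop_word_two_mul, List.drop_zero] at hFt
  rw [Q.drop_word_two_mul, List.drop_zero] at hGt
  have hFG : F = G := hF.eq_of_eigenvalues_eq hz hz1 hG fun m => by
    rw [hFe, hGe, huniv, huniv, strictMaps_congr h]
  rw [hFt 0 0 0 le_rfl, hGt 0 0 0 le_rfl, hFG]

end Transfer

/-! ### Pointwise description of codes -/

namespace DyckPath

variable {n : ℕ} (P : DyckPath n)

/-- The height of a Dyck path at a lattice point, as a natural number. -/
def natHt (s : ℕ) : ℕ := (P.pt s).toNat

lemma natHt_cast {s : ℕ} (hs : s ≤ 2 * n) : (P.natHt s : ℤ) = P.pt s :=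
  Int.toNat_of_nonneg (P.pt_nonneg hs)

lemma natHt_succ_of_up {s : ℕ} (hs : s < 2 * n) (h : P.isUp s = true) :
    P.natHt (s + 1) = P.natHt s + 1 := by
  have h1 := P.natHt_cast hs.le
  have h2 := P.natHt_cast (Nat.succ_le_of_lt hs)
  have := P.pt_succ_of_up hs h
  rw [Nat.succ_eq_add_one] at h2
  omega

lemma natHt_succ_of_down {s : ℕ} (hs : s < 2 * n) (h : P.isUp s = false) :
    P.natHt (s + 1) + 1 = P.natHt s := by
  have h1 := P.natHt_cast hs.le
  have h2 := P.natHt_cast (Nat.succ_le_of_lt hs)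
  have := P.pt_succ_of_down hs h
  rw [Nat.succ_eq_add_one] at h2
  omega

lemma natHt_succ {s : ℕ} (hs : s < 2 * n) :
    P.natHt (s + 1) = nextHt (P.isUp s) (P.natHt s) := by
  cases h : P.isUp s
  · have := P.natHt_succ_of_down hs h
    simp only [nextHt, Bool.false_eq_true, if_false]
    omega
  · simpa [nextHt] using P.natHt_succ_of_up hs h

/-- The up step at `p` is open at the lattice point `s`: its chord ends after `s`. -/
def IsOpen (p s : ℕ) : Prop := p < s ∧ ∀ m, p < m → m ≤ s → P.natHt p < P.natHt m

variable {P}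

lemma IsOpen.isUp {p s : ℕ} (h : P.IsOpen p s) (hs : s ≤ 2 * n) : P.isUp p = true := by
  by_contra hp
  have h1 := P.natHt_succ_of_down (s := p) (by have := h.1; omega) (by simpa using hp)
  have h2 := h.2 (p + 1) (by omega) h.1
  omega

lemma exists_isOpen {s h : ℕ} (hs : s ≤ 2 * n) (hh : h < P.natHt s) :
    ∃ p, P.IsOpen p s ∧ P.natHt p = h := by
  induction s with
  | zero => simp [natHt, P.pt_zero] at hh
  | succ s ih =>
    have hext : h < P.natHt s → ∃ p, P.IsOpen p (s + 1) ∧ P.natHt p = h := by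
      intro h'
      obtain ⟨p, ⟨hp1, hp2⟩, rfl⟩ := ih (by omega) h'
      refine ⟨p, ⟨by omega, fun m hm hms => ?_⟩, rfl⟩
      rcases hms.eq_or_lt with rfl | hms
      · exact hh
      · exact hp2 m hm (by omega)
    cases hup : P.isUp s
    · have := P.natHt_succ_of_down hs hup
      exact hext (by omega)
    · have := P.natHt_succ_of_up hs hup
      by_cases h' : h < P.natHt s
      · exact hext h'
      · refine ⟨s, ⟨by omega, fun m hm hms => ?_⟩, by omega⟩
        rw [show m = s + 1 by omega]
        omega

variable (P)

/-- The floor function at the lattice point `s`, for step multiplicities `t`. -/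
def floorAt (t : ℕ → ℕ) : ℕ → ℕ → ℕ
  | 0 => 0
  | s + 1 => nextFloor (P.isUp s) (P.natHt s) (floorAt t s) (t s)

/-- Admissibility of the step `s` for multiplicities `t` and column counts `c`. -/
def StepAdmissible (t c : ℕ → ℕ) (s : ℕ) : Prop :=
  (t s, c (s + 1)) ∈ stepChoices (P.isUp s) (P.natHt s) (P.floorAt t s) (c s)

variable {P}

lemma stepAdmissible_of_up {t c : ℕ → ℕ} {s : ℕ} (h : P.isUp s = true) :
    P.StepAdmissible t c s ↔ P.floorAt t s (P.natHt s) ≤ t s ∧ t s ≤ c s ∧ t s ≤ c (s + 1) ∧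
      c (s + 1) ≤ c s ∧ c s ≤ c (s + 1) + 1 := by
  simp only [StepAdmissible, stepChoices, h, if_true, mem_filter, mem_product, mem_Icc]
  omega

lemma stepAdmissible_of_down {t c : ℕ → ℕ} {s : ℕ} (h : P.isUp s = false) :
    P.StepAdmissible t c s ↔ t s = P.floorAt t s (P.natHt s) ∧ t s ≤ c s ∧ t s ≤ c (s + 1) ∧
      c s ≤ c (s + 1) ∧ c (s + 1) ≤ c s + 1 := by
  simp only [StepAdmissible, stepChoices, h, Bool.false_eq_true, if_false, mem_filter,
    mem_product, mem_Icc, mem_singleton]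
  omega

lemma floorAt_zero (t : ℕ → ℕ) (s : ℕ) : P.floorAt t s 0 = 0 := by
  induction s with
  | zero => rfl
  | succ s ih =>
    cases h : P.isUp s <;> simp [floorAt, nextFloor, h, ih]

lemma IsOpen.floorAt_eq {t : ℕ → ℕ} {p s : ℕ} (h : P.IsOpen p s) (hs : s ≤ 2 * n) :
    P.floorAt t s (P.natHt p + 1) = t p := by
  induction s with
  | zero => exact absurd h.1 (by omega)
  | succ s ih =>
    rcases (Nat.lt_succ_iff.mp h.1).eq_or_lt with rfl | hps
    · simp [floorAt, nextFloor, h.isUp hs]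
    · have h' : P.IsOpen p s := ⟨hps, fun m hm hms => h.2 m hm (by omega)⟩
      have hlt := h.2 s hps (by omega)
      have hne : P.natHt p ≠ P.natHt s := by omega
      cases hup : P.isUp s
      · simpa [floorAt, nextFloor, hup] using ih h' (by omega)
      · simpa [floorAt, nextFloor, hup, hne] using ih h' (by omega)

lemma floorAt_mono {t c : ℕ → ℕ} {s : ℕ} (hs : s ≤ 2 * n)
    (hadm : ∀ r < s, P.StepAdmissible t c r) {h h' : ℕ} (hh : h ≤ h') (hh' : h' ≤ P.natHt s) :
    P.floorAt t s h ≤ P.floorAt t s h' := by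
  induction s generalizing h h' with
  | zero => simp [floorAt]
  | succ s ih =>
    have ih' := fun {h h'} => @ih (by omega) (fun r hr => hadm r (by omega)) h h'
    cases hup : P.isUp s
    · have := P.natHt_succ_of_down hs hup
      simpa [floorAt, nextFloor, hup] using ih' hh (by omega)
    · have h1 := P.natHt_succ_of_up hs hup
      have h2 := ((stepAdmissible_of_up hup).mp (hadm s (by omega))).1
      simp only [floorAt, nextFloor, hup, if_true, Function.update_apply]
      split_ifs with h3 h4 h4
      · exact le_rfl
      · omega
      · exact (ih' (by omega) le_rfl).trans h2
      · exact ih' hh (by omega)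

variable (P)

/-- The pointwise conditions on step multiplicities `t` and column counts `c` that characterize
codes of cover-inclusive tilings. -/
structure GoodCode (t c : ℕ → ℕ) : Prop where
  start : c 0 = 0
  finish : c (2 * n) = 0
  up : ∀ s < 2 * n, P.isUp s = true → c (s + 1) ≤ c s ∧ c s ≤ c (s + 1) + 1
  down : ∀ s < 2 * n, P.isUp s = false → c s ≤ c (s + 1) ∧ c (s + 1) ≤ c s + 1
  le_left : ∀ s < 2 * n, t s ≤ c s
  le_right : ∀ s < 2 * n, t s ≤ c (s + 1)
  nested : ∀ p s, s < 2 * n → P.IsOpen p s → t p ≤ t s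
  closing : ∀ p s, s < 2 * n → P.IsOpen p s → P.natHt (s + 1) = P.natHt p → t s = t p

variable {P}

lemma goodCode_iff {t c : ℕ → ℕ} (h0 : c 0 = 0) :
    P.GoodCode t c ↔ (∀ s < 2 * n, P.StepAdmissible t c s) ∧ c (2 * n) = 0 := by
  constructor
  · intro h
    refine ⟨fun s hs => ?_, h.finish⟩
    cases hup : P.isUp s
    · have h1 := P.natHt_succ_of_down hs hup
      obtain ⟨p, hp, hps⟩ := exists_isOpen (P := P) (s := s) (h := P.natHt (s + 1)) hs.le (by omega)
      have h2 := hp.floorAt_eq (t := t) hs.le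
      rw [hps, h1] at h2
      exact (stepAdmissible_of_down hup).mpr ⟨by rw [h2, h.closing p s hs hp hps.symm],
        h.le_left s hs, h.le_right s hs, h.down s hs hup⟩
    · refine (stepAdmissible_of_up hup).mpr
        ⟨?_, h.le_left s hs, h.le_right s hs, h.up s hs hup⟩
      rcases Nat.eq_zero_or_pos (P.natHt s) with h1 | h1
      · rw [h1, floorAt_zero]
        exact Nat.zero_le _
      · obtain ⟨p, hp, hps⟩ := exists_isOpen (P := P) (s := s) (h := P.natHt s - 1) hs.le (by omega)
        have h2 := hp.floorAt_eq (t := t) hs.le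
        rw [hps, Nat.sub_add_cancel h1] at h2
        rw [h2]
        exact h.nested p s hs hp
  · rintro ⟨h, hN⟩
    have hfloor : ∀ p s, s < 2 * n → P.IsOpen p s → t p ≤ P.floorAt t s (P.natHt s) := by
      intro p s hs hp
      rw [← hp.floorAt_eq (t := t) hs.le]
      exact floorAt_mono hs.le (fun r hr => h r (by omega)) (hp.2 s hp.1 le_rfl) le_rfl
    refine ⟨h0, hN, fun s hs hup => ?_, fun s hs hup => ?_, fun s hs => ?_, fun s hs => ?_,
      fun p s hs hp => ?_, fun p s hs hp hps => ?_⟩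
    · exact ((stepAdmissible_of_up hup).mp (h s hs)).2.2.2
    · exact ((stepAdmissible_of_down hup).mp (h s hs)).2.2.2
    · cases hup : P.isUp s
      · exact ((stepAdmissible_of_down hup).mp (h s hs)).2.1
      · exact ((stepAdmissible_of_up hup).mp (h s hs)).2.1
    · cases hup : P.isUp s
      · exact ((stepAdmissible_of_down hup).mp (h s hs)).2.2.1
      · exact ((stepAdmissible_of_up hup).mp (h s hs)).2.2.1
    · refine (hfloor p s hs hp).trans ?_
      cases hup : P.isUp s
      · exact ((stepAdmissible_of_down hup).mp (h s hs)).1.ge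
      · exact ((stepAdmissible_of_up hup).mp (h s hs)).1
    · have h1 := hp.2 s hp.1 le_rfl
      cases hup : P.isUp s
      · have h2 := P.natHt_succ_of_down hs hup
        rw [((stepAdmissible_of_down hup).mp (h s hs)).1, ← h2, hps, hp.floorAt_eq hs.le]
      · have := P.natHt_succ_of_up hs hup
        omega

/-- The code with step multiplicities `t` and column counts `c`, on `k` steps from step `s`. -/
def codeList (t c : ℕ → ℕ) (s k : ℕ) : List (ℕ × ℕ) :=
  (List.range' s k).map fun r => (t r, c (r + 1))

lemma codeList_succ (t c : ℕ → ℕ) (s k : ℕ) :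
    codeList t c s (k + 1) = (t s, c (s + 1)) :: codeList t c (s + 1) k := by
  simp [codeList, List.range'_succ]

lemma codeList_mem_codes {t c : ℕ → ℕ} {s k : ℕ} (hk : s + k = 2 * n) :
    codeList t c s k ∈ codes (P.word.drop s) (P.natHt s) (P.floorAt t s) (c s) ↔
      (∀ r, s ≤ r → r < 2 * n → P.StepAdmissible t c r) ∧ c (2 * n) = 0 := by
  induction k generalizing s with
  | zero =>
    obtain rfl : s = 2 * n := by omega
    rw [P.drop_word_two_mul]
    have : ∀ r, 2 * n ≤ r → r < 2 * n → P.StepAdmissible t c r := fun r h1 h2 => by omega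
    by_cases hc : c (2 * n) = 0 <;> simp +contextual [codes, codeList, hc, this]
  | succ k ih =>
    have hs : s < 2 * n := by omega
    rw [P.drop_word hs, codes, codeList_succ]
    simp only [mem_biUnion, mem_image, List.cons.injEq]
    have ih' := ih (s := s + 1) (by omega)
    rw [P.natHt_succ hs] at ih'
    constructor
    · rintro ⟨p, hp, d, hd, rfl, rfl⟩
      obtain ⟨h1, h2⟩ := ih'.mp hd
      refine ⟨fun r hr hr' => ?_, h2⟩
      rcases hr.eq_or_lt with rfl | hr
      · exact hp
      · exact h1 r hr hr'
    · rintro ⟨h1, h2⟩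
      exact ⟨_, h1 s le_rfl hs, _, ih'.mpr ⟨fun r hr hr' => h1 r (by omega) hr', h2⟩, rfl, rfl⟩

lemma codeList_mem_codes_word {t c : ℕ → ℕ} (h0 : c 0 = 0) :
    codeList t c 0 (2 * n) ∈ codes P.word 0 0 0 ↔ P.GoodCode t c := by
  have := codeList_mem_codes (P := P) (t := t) (c := c) (s := 0) (k := 2 * n) (by omega)
  rw [goodCode_iff h0]
  simpa [natHt, P.pt_zero, floorAt, h0] using this

lemma length_of_mem_codes {L : List Bool} {h : ℕ} {floor : ℕ → ℕ} {c : ℕ} {d : List (ℕ × ℕ)}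
    (hd : d ∈ codes L h floor c) : d.length = L.length := by
  induction L generalizing h floor c d with
  | nil =>
    rw [codes] at hd
    split_ifs at hd
    · simp [mem_singleton.mp hd]
    · simp at hd
  | cons b L ih =>
    rw [codes] at hd
    simp only [mem_biUnion, mem_image] at hd
    obtain ⟨p, _, d', hd', rfl⟩ := hd
    simp [ih hd']

/-- Every code comes from pointwise data. -/
lemma exists_goodCode {d : List (ℕ × ℕ)} (hd : d ∈ codes P.word 0 0 0) :
    ∃ t c, P.GoodCode t c ∧ codeList t c 0 (2 * n) = d := by
  have hlen : d.length = 2 * n := by rw [length_of_mem_codes hd]; simp [word]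
  let t : ℕ → ℕ := fun s => (d.getD s 0).1
  let c : ℕ → ℕ := fun s => if s = 0 then 0 else (d.getD (s - 1) 0).2
  have heq : codeList t c 0 (2 * n) = d := by
    refine List.ext_getElem (by simp [codeList, hlen]) fun i h1 h2 => ?_
    simp [codeList, t, c, h2]
  exact ⟨t, c, (codeList_mem_codes_word (by simp [c])).mp (heq ▸ hd), heq⟩

lemma codeDis_codeList {t c : ℕ → ℕ} {s k : ℕ} (hk : s + k = 2 * n) :
    codeDis (P.word.drop s) (c s) (codeList t c s k) =
      ∑ r ∈ Ico s (2 * n), if P.isUp r = false ∧ c (r + 1) = c r + 1 then 1 else 0 := by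
  induction k generalizing s with
  | zero =>
    obtain rfl : s = 2 * n := by omega
    simp [codeList, codeDis]
  | succ k ih =>
    have hs : s < 2 * n := by omega
    rw [P.drop_word hs, codeList_succ, codeDis, sum_eq_sum_Ico_succ_bot hs, ih (by omega)]

end DyckPath

/-! ### Boxes of a skew shape -/

namespace DyckPath

variable {n : ℕ} (P : DyckPath n)

/-- The box at level `l` above the lattice point number `k` of `P`. -/
def cell (k l : ℕ) : ℤ × ℤ := ((k : ℤ) - n, P.pt k + 2 * l)

variable {P} in
lemma cell_inj {k l k' l' : ℕ} : P.cell k l = P.cell k' l' ↔ k = k' ∧ l = l' := by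
  simp only [cell, Prod.mk.injEq]
  constructor
  · rintro ⟨h1, h2⟩
    obtain rfl : k = k' := by omega
    exact ⟨rfl, by omega⟩
  · rintro ⟨rfl, rfl⟩
    exact ⟨rfl, rfl⟩

lemma mem_skewCells {Q : DyckPath n} {c : ℕ → ℕ}
    (hc : ∀ k ≤ 2 * n, Q.pt k = P.pt k + 2 * c k) {p : ℤ × ℤ} :
    p ∈ skewCells P Q ↔ ∃ k ≤ 2 * n, ∃ l < c k, p = P.cell k l := by
  simp only [skewCells, mem_filter, mem_product, mem_Icc]
  constructor
  · rintro ⟨⟨⟨h1, h2⟩, -⟩, h3, h4, h5⟩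
    obtain ⟨k, hk⟩ := Int.eq_ofNat_of_zero_le (show 0 ≤ p.1 + n by omega)
    have hk2 : k ≤ 2 * n := by omega
    rw [P.ht_eq_pt hk] at h3
    rw [Q.ht_eq_pt hk, hc k hk2] at h4
    have h6 := P.pt_emod_two hk2
    refine ⟨k, hk2, ((p.2 - P.pt k) / 2).toNat, by omega, Prod.ext ?_ ?_⟩ <;>
      simp only [cell] <;> omega
  · rintro ⟨k, hk, l, hl, rfl⟩
    have h1 : (P.cell k l).1 + n = k := by simp [cell]
    have h2 := hc k hk
    have h3 := Q.pt_le k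
    have h4 := P.pt_nonneg hk
    have h5 := P.pt_emod_two hk
    rw [P.ht_eq_pt h1, Q.ht_eq_pt h1]
    simp only [cell]
    omega

/-- The boxes at level `l` above the lattice points `a, …, b` of `P`. -/
def seg (a b l : ℕ) : Finset (ℤ × ℤ) := (Icc a b).image fun k => P.cell k l

variable {P} in
lemma mem_seg {a b l : ℕ} {p : ℤ × ℤ} :
    p ∈ P.seg a b l ↔ ∃ k, a ≤ k ∧ k ≤ b ∧ p = P.cell k l := by
  simp only [seg, mem_image, mem_Icc, and_assoc, eq_comm (a := p)]

variable {P} in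
lemma cell_mem_seg {a b l k m : ℕ} : P.cell k m ∈ P.seg a b l ↔ a ≤ k ∧ k ≤ b ∧ m = l := by
  rw [mem_seg]
  constructor
  · rintro ⟨k', h1, h2, h3⟩
    obtain ⟨rfl, rfl⟩ := cell_inj.mp h3
    exact ⟨h1, h2, rfl⟩
  · rintro ⟨h1, h2, rfl⟩
    exact ⟨k, h1, h2, rfl⟩

lemma isDyckTile_seg {a b l : ℕ} (hab : a ≤ b) (hb : b ≤ 2 * n) (h : P.pt b = P.pt a)
    (hmin : ∀ k, a ≤ k → k ≤ b → P.pt a ≤ P.pt k) : IsDyckTile (P.seg a b l) := by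
  have key : ∀ x : ℤ, (a : ℤ) - n ≤ x → x ≤ (b : ℤ) - n →
      ∃ k : ℕ, a ≤ k ∧ k ≤ b ∧ x = k - n ∧ P.ht x = P.pt k := fun x h1 h2 => by
    obtain ⟨k, hk⟩ := Int.eq_ofNat_of_zero_le (show 0 ≤ x + n by omega)
    exact ⟨k, by omega, by omega, by omega, P.ht_eq_pt hk⟩
  refine ⟨(a : ℤ) - n, (b : ℤ) - n, fun x => P.ht x + 2 * l, by omega, fun x h1 h2 => ?_, ?_,
    fun x h1 h2 => ?_, ?_⟩
  · obtain ⟨k, hak, hkb, hx, hk⟩ := key x h1 h2.le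
    have h3 := P.pt_succ (s := k) (by omega)
    beta_reduce
    rw [hk, P.ht_eq_pt (k := k + 1) (by push_cast; omega), h3]
    split_ifs <;> omega
  · exact congrArg (· + 2 * (l : ℤ)) h
  · obtain ⟨k, hak, hkb, hx, hk⟩ := key x h1 h2
    have := hmin k hak hkb
    beta_reduce
    rw [hk]
    exact add_le_add_left this _
  · ext p
    simp only [mem_seg, mem_image, mem_Icc]
    constructor
    · rintro ⟨k, h1, h2, rfl⟩
      exact ⟨(k : ℤ) - n, by omega, rfl⟩
    · rintro ⟨x, ⟨h1, h2⟩, rfl⟩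
      obtain ⟨k, hak, hkb, hx, hk⟩ := key x h1 h2
      exact ⟨k, hak, hkb, by rw [cell, ← hk, hx]⟩

/-- A nonnegative function with unit steps is the height function of a Dyck path. -/
lemma exists_pt_eq {g : ℕ → ℤ} (h0 : g 0 = 0) (hend : g (2 * n) = 0)
    (hnn : ∀ k ≤ 2 * n, 0 ≤ g k)
    (hstep : ∀ s < 2 * n, g (s + 1) = g s + 1 ∨ g (s + 1) = g s - 1) :
    ∃ Q : DyckPath n, ∀ k ≤ 2 * n, Q.pt k = g k := by
  let st : Fin (2 * n) → Bool := fun i => decide (g (i + 1) = g i + 1)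
  have key : ∀ k ≤ 2 * n,
      ((univ.filter fun i : Fin (2 * n) => (i : ℕ) < k ∧ st i = true).card : ℤ) -
        (univ.filter fun i : Fin (2 * n) => (i : ℕ) < k ∧ st i = false).card = g k := by
    intro k hk
    rw [card_filter, card_filter]
    push_cast
    rw [← sum_sub_distrib]
    have h1 : ∀ i : Fin (2 * n), ((if (i : ℕ) < k ∧ st i = true then (1 : ℤ) else 0) -
        if (i : ℕ) < k ∧ st i = false then 1 else 0) =
        if (i : ℕ) < k then g (i + 1) - g i else 0 := by
      intro i
      rcases hstep i i.2 with h | h <;> by_cases hi : (i : ℕ) < k <;> simp [st, hi, h]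
      omega
    rw [sum_congr rfl fun i _ => h1 i,
      Fin.sum_univ_eq_sum_range (fun i => if i < k then g (i + 1) - g i else 0) (2 * n),
      ← sum_filter, show (range (2 * n)).filter (· < k) = range k by ext; simp; omega,
      sum_range_sub, h0, sub_zero]
  refine ⟨⟨st, ?_, fun k hk => ?_⟩, fun k hk => ?_⟩
  · have h1 := key (2 * n) le_rfl
    have h2 := card_filter_add_card_filter_not (s := (univ : Finset (Fin (2 * n))))
      (fun i => st i = true)
    simp only [Bool.not_eq_true, card_univ, Fintype.card_fin] at h2
    simp only [Fin.is_lt, true_and, hend] at h1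
    omega
  · have h1 := key k hk
    have h2 := hnn k hk
    omega
  · rw [pt_eq]
    exact key k hk

end DyckPath

/-! ### The structure of cover-inclusive tilings -/

namespace DyckTiling

variable {n : ℕ} (T : DyckTiling n)

/-- The number of boxes above the lattice point `k` of the lower path. -/
def colCount (k : ℕ) : ℕ := ((T.upper.pt k - T.lower.pt k) / 2).toNat

lemma upper_pt {k : ℕ} (hk : k ≤ 2 * n) : T.upper.pt k = T.lower.pt k + 2 * T.colCount k := by
  have h1 := T.lower.pt_emod_two hk
  have h2 := T.upper.pt_emod_two hk
  have h3 : T.lower.pt k ≤ T.upper.pt k := T.below _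
  simp only [colCount]
  omega

lemma mem_tile {t : Finset (ℤ × ℤ)} (ht : t ∈ T.tiles) {p : ℤ × ℤ} (hp : p ∈ t) :
    ∃ k ≤ 2 * n, ∃ l < T.colCount k, p = T.lower.cell k l := by
  rw [← T.lower.mem_skewCells fun k hk => T.upper_pt hk, ← T.cover, mem_biUnion]
  exact ⟨t, ht, hp⟩

lemma bounds_of_cell_mem {t : Finset (ℤ × ℤ)} (ht : t ∈ T.tiles) {k l : ℕ}
    (h : T.lower.cell k l ∈ t) : k ≤ 2 * n ∧ l < T.colCount k := by
  obtain ⟨k', hk, l', hl, h⟩ := T.mem_tile ht h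
  obtain ⟨rfl, rfl⟩ := DyckPath.cell_inj.mp h
  exact ⟨hk, hl⟩

lemma exists_tile {k l : ℕ} (hk : k ≤ 2 * n) (hl : l < T.colCount k) :
    ∃ t ∈ T.tiles, T.lower.cell k l ∈ t := by
  have := (T.lower.mem_skewCells fun k hk => T.upper_pt hk).mpr ⟨k, hk, l, hl, rfl⟩
  rwa [← T.cover, mem_biUnion] at this

lemma tile_unique {t u : Finset (ℤ × ℤ)} (ht : t ∈ T.tiles) (hu : u ∈ T.tiles) {p : ℤ × ℤ}
    (hpt : p ∈ t) (hpu : p ∈ u) : t = u := by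
  by_contra h
  exact disjoint_left.mp (T.disj t ht u hu h) hpt hpu

/-- A tile is described by its level in each column of an interval. -/
lemma exists_levels {t : Finset (ℤ × ℤ)} (ht : t ∈ T.tiles) : ∃ (a b : ℕ) (g : ℕ → ℕ),
    a ≤ b ∧ b ≤ 2 * n ∧ (∀ k l, T.lower.cell k l ∈ t ↔ a ≤ k ∧ k ≤ b ∧ l = g k) ∧
    (∀ k, a ≤ k → k < b →
      T.lower.pt (k + 1) + 2 * g (k + 1) = T.lower.pt k + 2 * g k + 1 ∨
      T.lower.pt (k + 1) + 2 * g (k + 1) = T.lower.pt k + 2 * g k - 1) ∧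
    T.lower.pt b + 2 * g b = T.lower.pt a + 2 * g a ∧
    ∀ k, a ≤ k → k ≤ b → T.lower.pt a + 2 * g a ≤ T.lower.pt k + 2 * g k := by
  obtain ⟨A, B, f, hAB, hstep, hend, hmin, htf⟩ := T.isDyck t ht
  have hmem : ∀ x, A ≤ x → x ≤ B → ∃ k ≤ 2 * n, ∃ l : ℕ, x = (k : ℤ) - n ∧
      f x = T.lower.pt k + 2 * l := by
    intro x h1 h2
    have : (x, f x) ∈ t := by
      rw [htf]
      exact mem_image_of_mem (fun x => (x, f x)) (mem_Icc.mpr ⟨h1, h2⟩)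
    obtain ⟨k, hk, l, -, h⟩ := T.mem_tile ht this
    simp only [DyckPath.cell, Prod.mk.injEq] at h
    exact ⟨k, hk, l, h⟩
  obtain ⟨a, ha2, -, ha, -⟩ := hmem A le_rfl hAB
  obtain ⟨b, hb2, -, hb, -⟩ := hmem B hAB le_rfl
  let g : ℕ → ℕ := fun k => ((f ((k : ℤ) - n) - T.lower.pt k) / 2).toNat
  have hg : ∀ k : ℕ, a ≤ k → k ≤ b → f ((k : ℤ) - n) = T.lower.pt k + 2 * g k := by
    intro k h1 h2
    obtain ⟨k', -, l, h3, h4⟩ := hmem ((k : ℤ) - n) (by omega) (by omega)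
    obtain rfl : k = k' := by omega
    simp only [g]
    omega
  refine ⟨a, b, g, by omega, hb2, fun k l => ?_, fun k h1 h2 => ?_, ?_, fun k h1 h2 => ?_⟩
  · rw [htf, mem_image]
    constructor
    · rintro ⟨x, hx, hxk⟩
      rw [mem_Icc] at hx
      simp only [DyckPath.cell, Prod.mk.injEq] at hxk
      have h1 : a ≤ k := by omega
      have h2 : k ≤ b := by omega
      have h3 := hg k h1 h2
      rw [← hxk.1, hxk.2] at h3
      exact ⟨h1, h2, by omega⟩
    · rintro ⟨h1, h2, rfl⟩
      exact ⟨(k : ℤ) - n, mem_Icc.mpr (by omega), Prod.ext rfl (hg k h1 h2)⟩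
  · have h3 := hstep ((k : ℤ) - n) (by omega) (by omega)
    rw [hg k h1 h2.le, show (k : ℤ) - n + 1 = ((k + 1 : ℕ) : ℤ) - n by push_cast; ring,
      hg (k + 1) (by omega) (by omega)] at h3
    exact h3
  · rwa [ha, hb, hg a le_rfl (by omega), hg b (by omega) le_rfl] at hend
  · have h3 := hmin ((k : ℤ) - n) (by omega) (by omega)
    rwa [ha, hg a le_rfl (by omega), hg k h1 h2] at h3

/-- Some tile has boxes at level `l` on both sides of the step `s`. -/
def Crosses (s l : ℕ) : Prop :=
  ∃ t ∈ T.tiles, T.lower.cell s l ∈ t ∧ T.lower.cell (s + 1) l ∈ t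

/-- The number of tiles crossing the step `s`. -/
def crossCount (s : ℕ) : ℕ := sInf {l | ¬ T.Crosses s l}

variable {T}

/-- In a cover-inclusive tiling, a tile above another one is above it in all of its columns. -/
lemma CoverInclusive.exists_below (hT : T.CoverInclusive) {t v : Finset (ℤ × ℤ)}
    (ht : t ∈ T.tiles) (hv : v ∈ T.tiles) {x i j : ℕ} (hi : T.lower.cell x i ∈ t)
    (hj : T.lower.cell x j ∈ v) (hji : j < i) {y k : ℕ} (hk : T.lower.cell y k ∈ t) :
    ∃ m < k, T.lower.cell y m ∈ v := by
  obtain ⟨a, b, g, -, hb2, hmem, hstep, -⟩ := T.exists_levels ht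
  obtain ⟨a', b', g', -, -, hmem', hstep', -⟩ := T.exists_levels hv
  have hne : t ≠ v := by
    rintro rfl
    have h1 := ((hmem _ _).mp hi).2.2
    have h2 := ((hmem _ _).mp hj).2.2
    omega
  have hsub : ∀ z, a ≤ z → z ≤ b → a' ≤ z ∧ z ≤ b' ∧ g z ≠ g' z := by
    intro z h1 h2
    have hz := (hmem z (g z)).mpr ⟨h1, h2, rfl⟩
    obtain ⟨w, hw⟩ := hT t ht v hv ⟨_, hi, _, hj, rfl, by simp only [DyckPath.cell]; omega⟩ _ hz
    obtain ⟨z', -, m, -, h⟩ := T.mem_tile hv hw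
    obtain rfl : z = z' := by
      have := congrArg Prod.fst h
      simp only [DyckPath.cell] at this
      omega
    rw [h] at hw
    have h3 := (hmem' _ _).mp hw
    refine ⟨h3.1, h3.2.1, fun h4 => hne (T.tile_unique ht hv hz ?_)⟩
    rw [h4, ← h3.2.2]
    exact hw
  have hiff : ∀ z, a ≤ z → z ≤ b → (g' z < g z ↔ g' a < g a) := by
    intro z hz
    induction z, hz using Nat.le_induction with
    | base => exact fun _ => Iff.rfl
    | succ z hz ih =>
      intro hzb
      rw [← ih (by omega)]
      have h1 := hsub z hz (by omega)
      have h2 := hsub (z + 1) (by omega) hzb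
      have h3 := hstep z hz (by omega)
      have h4 := hstep' z h1.1 (by omega)
      have h5 := T.lower.pt_succ (s := z) (by omega)
      split_ifs at h5 <;> omega
  obtain ⟨hx1, hx2, rfl⟩ := (hmem _ _).mp hi
  obtain ⟨-, -, rfl⟩ := (hmem' _ _).mp hj
  obtain ⟨hy1, hy2, rfl⟩ := (hmem _ _).mp hk
  exact ⟨g' y, (hiff y hy1 hy2).mpr ((hiff x hx1 hx2).mp hji),
    (hmem' _ _).mpr ⟨(hsub y hy1 hy2).1, (hsub y hy1 hy2).2.1, rfl⟩⟩

/-- In a cover-inclusive tiling, all boxes of a tile are at the same level. -/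
lemma CoverInclusive.level_eq (hT : T.CoverInclusive) {t : Finset (ℤ × ℤ)} (ht : t ∈ T.tiles)
    {x y k m : ℕ} (hk : T.lower.cell x k ∈ t) (hm : T.lower.cell y m ∈ t) : k = m := by
  induction k using Nat.strong_induction_on generalizing t x y m with
  | _ k ih =>
    rcases lt_trichotomy k m with h | h | h
    · have hb := T.bounds_of_cell_mem ht hm
      obtain ⟨v, hv, hmv⟩ := T.exists_tile (l := m - 1) hb.1 (by omega)
      obtain ⟨j, hj, hjv⟩ := hT.exists_below ht hv hm hmv (by omega) hk
      have := ih j hj hv hjv hmv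
      omega
    · exact h
    · exact (ih m h ht hm hk).symm

/-- The tiles of a cover-inclusive tiling are vertical translates of pieces of the lower path. -/
lemma CoverInclusive.exists_eq_seg (hT : T.CoverInclusive) {t : Finset (ℤ × ℤ)}
    (ht : t ∈ T.tiles) : ∃ a b l : ℕ, a ≤ b ∧ b ≤ 2 * n ∧ t = T.lower.seg a b l ∧
      T.lower.pt b = T.lower.pt a ∧
      ∀ k, a ≤ k → k ≤ b → T.lower.pt a ≤ T.lower.pt k := by
  obtain ⟨a, b, g, hab, hb2, hmem, -, hend, hmin⟩ := T.exists_levels ht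
  have hg : ∀ k, a ≤ k → k ≤ b → g k = g a := fun k h1 h2 =>
    hT.level_eq ht ((hmem k (g k)).mpr ⟨h1, h2, rfl⟩) ((hmem a (g a)).mpr ⟨le_rfl, hab, rfl⟩)
  refine ⟨a, b, g a, hab, hb2, ?_, ?_, fun k h1 h2 => ?_⟩
  · ext p
    rw [DyckPath.mem_seg]
    constructor
    · intro hp
      obtain ⟨k, -, l, -, rfl⟩ := T.mem_tile ht hp
      obtain ⟨h1, h2, rfl⟩ := (hmem _ _).mp hp
      exact ⟨k, h1, h2, by rw [hg k h1 h2]⟩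
    · rintro ⟨k, h1, h2, rfl⟩
      exact (hmem _ _).mpr ⟨h1, h2, (hg k h1 h2).symm⟩
  · rw [hg b hab le_rfl] at hend
    omega
  · have := hmin k h1 h2
    rw [hg k h1 h2] at this
    omega

lemma CoverInclusive.crosses_iff (hT : T.CoverInclusive) {s l : ℕ} :
    T.Crosses s l ↔ l < T.crossCount s := by
  have hne : {l | ¬ T.Crosses s l}.Nonempty := by
    refine ⟨T.colCount s, ?_⟩
    rintro ⟨t, ht, h, -⟩
    exact lt_irrefl _ (T.bounds_of_cell_mem ht h).2
  constructor
  · rintro ⟨t, ht, h1, h2⟩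
    by_contra hl
    refine Nat.sInf_mem hne (?_ : T.Crosses s (T.crossCount s))
    rcases (not_lt.mp hl).eq_or_lt with h | h
    · exact h ▸ ⟨t, ht, h1, h2⟩
    · have hb := T.bounds_of_cell_mem ht h1
      obtain ⟨v, hv, hsv⟩ := T.exists_tile (l := T.crossCount s) hb.1 (by omega)
      obtain ⟨m, -, hm⟩ := hT.exists_below ht hv h1 hsv h h2
      exact ⟨v, hv, hsv, hT.level_eq hv hsv hm ▸ hm⟩
  · intro hl
    exact not_not.mp (Nat.notMem_of_lt_sInf hl)

/-- The code of a cover-inclusive tiling is admissible. -/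
lemma CoverInclusive.goodCode (hT : T.CoverInclusive) :
    T.lower.GoodCode T.crossCount T.colCount := by
  have hpt : ∀ {k}, k ≤ 2 * n → (T.lower.natHt k : ℤ) = T.lower.pt k :=
    fun hk => T.lower.natHt_cast hk
  have hnested : ∀ p s, s < 2 * n → T.lower.IsOpen p s → T.crossCount p ≤ T.crossCount s := by
    intro p s hs hp
    by_contra! hlt
    obtain ⟨t, ht, h1, h2⟩ := hT.crosses_iff.mpr hlt
    obtain ⟨a, b, l, hab, hb2, rfl, hend, hmin⟩ := hT.exists_eq_seg ht
    obtain ⟨h3, h4, h5⟩ := DyckPath.cell_mem_seg.mp h1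
    have h6 := (DyckPath.cell_mem_seg.mp h2).2.1
    have hbs : s < b := by
      by_contra! hbs
      have h7 := hp.2 b (by omega) hbs
      have h8 := hmin p h3 h4
      have h9 := hpt hb2
      have h10 := hpt (h4.trans hb2)
      omega
    refine lt_irrefl _ (hT.crosses_iff.mp ⟨_, ht, DyckPath.cell_mem_seg.mpr ⟨?_, ?_, h5⟩,
      DyckPath.cell_mem_seg.mpr ⟨?_, hbs, h5⟩⟩) <;> have := hp.1 <;> omega
  refine ⟨?_, ?_, fun s hs hup => ?_, fun s hs hup => ?_, fun s hs => ?_, fun s hs => ?_,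
    hnested, fun p s hs hp hps => (hnested p s hs hp).antisymm' ?_⟩
  · simp [colCount, DyckPath.pt_zero]
  · simp [colCount, DyckPath.pt_two_mul]
  · have h1 := T.upper_pt hs.le
    have h2 := T.upper_pt (Nat.succ_le_of_lt hs)
    have h3 := T.upper.pt_succ hs
    have h4 := T.lower.pt_succ_of_up hs hup
    simp only [Nat.succ_eq_add_one] at h2
    split_ifs at h3 <;> omega
  · have h1 := T.upper_pt hs.le
    have h2 := T.upper_pt (Nat.succ_le_of_lt hs)
    have h3 := T.upper.pt_succ hs
    have h4 := T.lower.pt_succ_of_down hs hup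
    simp only [Nat.succ_eq_add_one] at h2
    split_ifs at h3 <;> omega
  · by_contra! hlt
    obtain ⟨t, ht, h1, -⟩ := hT.crosses_iff.mpr hlt
    exact lt_irrefl _ (T.bounds_of_cell_mem ht h1).2
  · by_contra! hlt
    obtain ⟨t, ht, -, h1⟩ := hT.crosses_iff.mpr hlt
    exact lt_irrefl _ (T.bounds_of_cell_mem ht h1).2
  · by_contra! hlt
    obtain ⟨t, ht, h1, h2⟩ := hT.crosses_iff.mpr hlt
    obtain ⟨a, b, l, hab, hb2, rfl, hend, hmin⟩ := hT.exists_eq_seg ht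
    obtain ⟨h3, h4, h5⟩ := DyckPath.cell_mem_seg.mp h1
    have h6 := (DyckPath.cell_mem_seg.mp h2).2.1
    have hap : a ≤ p := by
      by_contra! hap
      have h7 := hp.2 a hap h3
      have h8 := hmin (s + 1) (by omega) h6
      have h9 := hpt (hab.trans hb2)
      have h10 := hpt (Nat.succ_le_of_lt hs)
      simp only [Nat.succ_eq_add_one] at h10
      omega
    refine lt_irrefl _ (hT.crosses_iff.mp ⟨_, ht, DyckPath.cell_mem_seg.mpr ⟨hap, ?_, h5⟩,
      DyckPath.cell_mem_seg.mpr ⟨?_, ?_, h5⟩⟩) <;> have := hp.1 <;> omega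

lemma CoverInclusive.tiles_subset {U : DyckTiling n} (hT : T.CoverInclusive)
    (hU : U.CoverInclusive) (hlow : U.lower = T.lower)
    (hcol : ∀ k ≤ 2 * n, T.colCount k = U.colCount k)
    (hcross : ∀ s < 2 * n, T.crossCount s = U.crossCount s) : T.tiles ⊆ U.tiles := by
  intro t ht
  have hiff : ∀ {s l}, s < 2 * n → (T.Crosses s l ↔ U.Crosses s l) := fun hs => by
    rw [hT.crosses_iff, hU.crosses_iff, hcross _ hs]
  obtain ⟨a, b, l, hab, hb2, htseg, -⟩ := hT.exists_eq_seg ht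
  have hat : T.lower.cell a l ∈ t := by
    rw [htseg]
    exact DyckPath.cell_mem_seg.mpr ⟨le_rfl, hab, rfl⟩
  have hbd := T.bounds_of_cell_mem ht hat
  obtain ⟨u, hu, hau⟩ := U.exists_tile hbd.1 (by rw [← hcol _ hbd.1]; exact hbd.2)
  obtain ⟨a', b', l', hab', hb2', huseg, -⟩ := hU.exists_eq_seg hu
  have hmem : ∀ k, T.lower.cell k l ∈ t ↔ a ≤ k ∧ k ≤ b := by
    simp [htseg, DyckPath.cell_mem_seg]
  rw [hlow] at huseg hau
  obtain ⟨h1, h2, rfl⟩ : a' ≤ a ∧ a ≤ b' ∧ l = l' := by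
    rwa [huseg, DyckPath.cell_mem_seg] at hau
  have hmem' : ∀ k, U.lower.cell k l ∈ u ↔ a' ≤ k ∧ k ≤ b' := by
    simp [huseg, hlow, DyckPath.cell_mem_seg]
  have hstepT : ∀ s, s < 2 * n → U.Crosses s l → (T.lower.cell s l ∈ t ↔
      T.lower.cell (s + 1) l ∈ t) := by
    intro s hs h
    obtain ⟨v, hv, h3, h4⟩ := (hiff hs).mpr h
    exact ⟨fun h5 => T.tile_unique ht hv h5 h3 ▸ h4, fun h5 => T.tile_unique ht hv h5 h4 ▸ h3⟩
  have hstepU : ∀ s, s < 2 * n → T.Crosses s l → (U.lower.cell s l ∈ u ↔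
      U.lower.cell (s + 1) l ∈ u) := by
    intro s hs h
    obtain ⟨v, hv, h3, h4⟩ := (hiff hs).mp h
    exact ⟨fun h5 => U.tile_unique hu hv h5 h3 ▸ h4, fun h5 => U.tile_unique hu hv h5 h4 ▸ h3⟩
  have hcT : ∀ s, a ≤ s → s < b → T.Crosses s l := fun s h3 h4 =>
    ⟨t, ht, (hmem _).mpr ⟨h3, h4.le⟩, (hmem _).mpr ⟨by omega, h4⟩⟩
  have hcU : ∀ s, a' ≤ s → s < b' → U.Crosses s l := fun s h3 h4 =>
    ⟨u, hu, (hmem' _).mpr ⟨h3, h4.le⟩, (hmem' _).mpr ⟨by omega, h4⟩⟩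
  simp only [hmem] at hstepT
  simp only [hmem'] at hstepU
  have hb : b = b' := by
    rcases lt_trichotomy b b' with h | h | h
    · have := hstepT b (by omega) (hcU b (by omega) h)
      omega
    · exact h
    · have := hstepU b' (by omega) (hcT b' (by omega) h)
      omega
  have ha : a' = a := by
    by_contra hne
    have := hstepT (a - 1) (by omega) (hcU (a - 1) (by omega) (by omega))
    omega
  rw [htseg, hb, ← ha, ← huseg]
  exact hu

/-- A cover-inclusive tiling is determined by its code. -/
lemma CoverInclusive.eq_of_code_eq {U : DyckTiling n} (hT : T.CoverInclusive)
    (hU : U.CoverInclusive) (hlow : T.lower = U.lower)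
    (hcol : ∀ k ≤ 2 * n, T.colCount k = U.colCount k)
    (hcross : ∀ s < 2 * n, T.crossCount s = U.crossCount s) : T = U := by
  have hup : T.upper = U.upper := DyckPath.ext_pt fun k hk => by
    rw [T.upper_pt hk, U.upper_pt hk, hlow, hcol k hk]
  have htiles : T.tiles = U.tiles :=
    (hT.tiles_subset hU hlow.symm hcol hcross).antisymm
      (hU.tiles_subset hT hlow (fun k hk => (hcol k hk).symm) fun s hs => (hcross s hs).symm)
  cases T
  cases U
  simp only at hlow hup htiles
  subst hlow hup htiles
  rfl

lemma dis_eq (T : DyckTiling n) : T.dis =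
    ∑ r ∈ Ico 0 (2 * n),
      if T.lower.isUp r = false ∧ T.colCount (r + 1) = T.colCount r + 1 then 1 else 0 := by
  rw [dis, card_filter, ← range_eq_Ico, ← Fin.sum_univ_eq_sum_range (fun r =>
    if T.lower.isUp r = false ∧ T.colCount (r + 1) = T.colCount r + 1 then 1 else 0)]
  refine sum_congr rfl fun i _ => if_congr ?_ rfl rfl
  rw [T.lower.isUp_eq i.2, ← T.upper.isUp_eq i.2]
  refine and_congr_right fun h => ?_
  have h1 := T.upper_pt i.2.le
  have h2 := T.upper_pt (Nat.succ_le_of_lt i.2)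
  have h3 := T.upper.pt_succ i.2
  have h4 := T.lower.pt_succ_of_down i.2 (by rw [T.lower.isUp_eq i.2]; exact h)
  simp only [Nat.succ_eq_add_one] at h2
  cases h5 : T.upper.isUp i <;> simp only [h5, if_true, Bool.false_eq_true, if_false,
    false_iff, true_iff] at h3 ⊢ <;> omega

end DyckTiling

/-! ### Tilings from codes -/

namespace DyckPath

variable {n : ℕ} (P : DyckPath n)

/-- A maximal interval of columns connected at level `l`. -/
structure IsRun (n : ℕ) (t c : ℕ → ℕ) (a b l : ℕ) : Prop where
  le : a ≤ b
  le_two_mul : b ≤ 2 * n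
  lt_col : l < c a
  cross : ∀ s, a ≤ s → s < b → l < t s
  left : ∀ s, s + 1 = a → t s ≤ l
  right : t b ≤ l

variable {P} {t c : ℕ → ℕ}

lemma IsRun.lt_count {a b l : ℕ} (h : IsRun n t c a b l) (hg : P.GoodCode t c) {k : ℕ}
    (hak : a ≤ k) (hkb : k ≤ b) : l < c k := by
  have := h.le_two_mul
  rcases hkb.eq_or_lt with rfl | hkb
  · rcases hak.eq_or_lt with rfl | hak
    · exact h.lt_col
    · have h1 := h.cross (k - 1) (by omega) (by omega)
      have h2 := hg.le_right (k - 1) (by omega)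
      rw [Nat.sub_add_cancel (by omega)] at h2
      omega
  · exact (h.cross k hak hkb).trans_le (hg.le_left k (by omega))

/-- A run at a lower level sharing a column with a given run contains it. -/
lemma IsRun.subset {a b l a' b' l' x : ℕ} (h : IsRun n t c a b l) (h' : IsRun n t c a' b' l')
    (hl : l' ≤ l) (hax : a ≤ x) (hxb : x ≤ b) (hax' : a' ≤ x) (hxb' : x ≤ b') :
    a' ≤ a ∧ b ≤ b' := by
  constructor
  · by_contra! hlt
    have h1 := h.cross (a' - 1) (by omega) (by omega)
    have h2 := h'.left (a' - 1) (by omega)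
    omega
  · by_contra! hlt
    have h1 := h.cross b' (by omega) (by omega)
    have h2 := h'.right
    omega

lemma GoodCode.exists_isRun (hg : P.GoodCode t c) {x l : ℕ} (hx : x ≤ 2 * n) (hl : l < c x) :
    ∃ a b, IsRun n t c a b l ∧ a ≤ x ∧ x ≤ b := by
  classical
  have hA : ∃ a, a ≤ x ∧ ∀ s, a ≤ s → s < x → l < t s := ⟨x, le_rfl, fun s h1 h2 => by omega⟩
  have hB : ∃ b, x ≤ b ∧ ¬ (b < 2 * n ∧ l < t b) := ⟨2 * n, hx, by omega⟩
  obtain ⟨ha, ha'⟩ := Nat.find_spec hA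
  obtain ⟨hb, hb'⟩ := Nat.find_spec hB
  have hamin := fun m => Nat.find_min hA (m := m)
  have hbmin := fun m => Nat.find_min hB (m := m)
  set a := Nat.find hA
  set b := Nat.find hB
  have hb2 : b ≤ 2 * n := Nat.find_min' hB ⟨hx, by omega⟩
  have hcb : ∀ s, x ≤ s → s < b → l < t s := fun s h1 h2 => by
    have := hbmin s h2
    tauto
  have hca : l < c a := by
    rcases ha.eq_or_lt with h | h
    · rwa [h]
    · exact (ha' a le_rfl h).trans_le (hg.le_left a (by omega))
  have hclb : l < c b := by
    rcases hb.eq_or_lt with h | h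
    · rwa [← h]
    · have h1 := hcb (b - 1) (by omega) (by omega)
      have h2 := hg.le_right (b - 1) (by omega)
      rw [Nat.sub_add_cancel (by omega)] at h2
      omega
  have hbne : b ≠ 2 * n := by
    intro h
    rw [h, hg.finish] at hclb
    omega
  refine ⟨a, b, ⟨by omega, hb2, hca, fun s h1 h2 => ?_, fun s hs => ?_, ?_⟩, ha, hb⟩
  · by_cases h : s < x
    · exact ha' s h1 h
    · exact hcb s (by omega) h2
  · by_contra! hlt
    refine hamin s (by omega) ⟨by omega, fun r h1 h2 => ?_⟩
    rcases h1.eq_or_lt with rfl | h1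
    · exact hlt
    · exact ha' r (by omega) h2
  · by_contra! hlt
    exact hb' ⟨by omega, hlt⟩

lemma IsRun.natHt_left_le {a b l : ℕ} (h : IsRun n t c a b l) (hg : P.GoodCode t c) {x : ℕ}
    (hax : a ≤ x) (hxb : x ≤ b) : P.natHt a ≤ P.natHt x := by
  have hb2 := h.le_two_mul
  induction x using Nat.strong_induction_on with
  | _ x ih =>
    by_contra! hlt
    have hne : a ≠ x := by
      rintro rfl
      exact lt_irrefl _ hlt
    obtain ⟨y, rfl⟩ : ∃ y, x = y + 1 := ⟨x - 1, by omega⟩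
    have hy := ih y (by omega) (by omega) (by omega)
    have hdown : P.isUp y = false := by
      by_contra hup
      have := P.natHt_succ_of_up (s := y) (by omega) (by simpa using hup)
      omega
    have h1 := P.natHt_succ_of_down (s := y) (by omega) hdown
    obtain ⟨p, hp, hph⟩ := exists_isOpen (P := P) (s := a) (by omega) hlt
    have hpy : P.IsOpen p y := by
      refine ⟨by have := hp.1; omega, fun m hm1 hm2 => ?_⟩
      by_cases hma : m ≤ a
      · exact hp.2 m hm1 hma
      · have := ih m (by omega) (by omega) (by omega)
        omega
    have h2 := hg.closing p y (by omega) hpy hph.symm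
    have h3 := h.cross y (by omega) (by omega)
    have h4 := h.left (a - 1) (by have := hp.1; omega)
    have h5 : t p ≤ t (a - 1) := by
      rcases (show p ≤ a - 1 by have := hp.1; omega).eq_or_lt with h6 | h6
      · rw [h6]
      · exact hg.nested p (a - 1) (by omega) ⟨h6, fun m hm1 hm2 => hp.2 m hm1 (by omega)⟩
    omega

lemma IsRun.natHt_right_le {a b l : ℕ} (h : IsRun n t c a b l) (hg : P.GoodCode t c) {x : ℕ}
    (hax : a ≤ x) (hxb : x ≤ b) : P.natHt b ≤ P.natHt x := by
  by_contra! hlt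
  have hb2 := h.le_two_mul
  obtain ⟨p, hp, hph⟩ := exists_isOpen (P := P) (h := P.natHt b - 1) hb2 (by omega)
  have hxp : x ≤ p := by
    by_contra! hpx
    have := hp.2 x hpx hxb
    omega
  have hbn : b ≠ 2 * n := by
    rintro rfl
    simp [natHt, pt_two_mul] at hlt
  have h1 := hg.nested p b (by omega) hp
  have h2 := h.cross p (by omega) hp.1
  have h3 := h.right
  omega

lemma IsRun.isDyckTile {a b l : ℕ} (h : IsRun n t c a b l) (hg : P.GoodCode t c) :
    IsDyckTile (P.seg a b l) := by
  have hb2 := h.le_two_mul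
  have hab := h.le
  refine P.isDyckTile_seg hab hb2 ?_ fun k h1 h2 => ?_
  · rw [← P.natHt_cast hb2, ← P.natHt_cast (hab.trans hb2),
      (h.natHt_right_le hg le_rfl hab).antisymm (h.natHt_left_le hg hab le_rfl)]
  · rw [← P.natHt_cast (hab.trans hb2), ← P.natHt_cast (h2.trans hb2)]
    exact_mod_cast h.natHt_left_le hg h1 h2

variable (P t c) in
open Classical in
/-- The tiles given by all the runs of a code. -/
def runTiles : Finset (Finset (ℤ × ℤ)) :=
  (range (2 * n + 1) ×ˢ range (2 * n + 1)).biUnion fun q =>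
    ((range (c q.1)).filter fun l => IsRun n t c q.1 q.2 l).image (P.seg q.1 q.2)

lemma mem_runTiles {u : Finset (ℤ × ℤ)} :
    u ∈ P.runTiles t c ↔ ∃ a b l, IsRun n t c a b l ∧ P.seg a b l = u := by
  simp only [runTiles, mem_biUnion, mem_product, mem_image, mem_filter, mem_range]
  constructor
  · rintro ⟨q, -, l, ⟨-, h⟩, rfl⟩
    exact ⟨_, _, _, h, rfl⟩
  · rintro ⟨a, b, l, h, rfl⟩
    have h1 := h.le
    have h2 := h.le_two_mul
    exact ⟨(a, b), ⟨by simp only; omega, by simp only; omega⟩, l, ⟨h.lt_col, h⟩, rfl⟩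

/-- Every admissible code is the code of a cover-inclusive tiling. -/
lemma GoodCode.exists_tiling (hg : P.GoodCode t c) :
    ∃ T : DyckTiling n, T.CoverInclusive ∧ T.lower = P ∧ (∀ k ≤ 2 * n, T.colCount k = c k) ∧
      ∀ s < 2 * n, T.crossCount s = t s := by
  obtain ⟨Q, hQ⟩ := exists_pt_eq (n := n) (g := fun k => P.pt k + 2 * c k)
    (by simp [pt_zero, hg.start]) (by simp [pt_two_mul, hg.finish])
    (fun k hk => by have := P.pt_nonneg hk; positivity)
    (fun s hs => by
      cases hup : P.isUp s
      · have h1 := P.pt_succ_of_down hs hup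
        have h2 := hg.down s hs hup
        omega
      · have h1 := P.pt_succ_of_up hs hup
        have h2 := hg.up s hs hup
        omega)
  have heq : ∀ {a b l a' b' l' x m}, IsRun n t c a b l → IsRun n t c a' b' l' →
      P.cell x m ∈ P.seg a b l → P.cell x m ∈ P.seg a' b' l' → P.seg a b l = P.seg a' b' l' := by
    intro a b l a' b' l' x m h h' hx hx'
    obtain ⟨h1, h2, rfl⟩ := cell_mem_seg.mp hx
    obtain ⟨h1', h2', rfl⟩ := cell_mem_seg.mp hx'
    obtain ⟨h3, h4⟩ := h.subset h' le_rfl h1 h2 h1' h2'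
    obtain ⟨h5, h6⟩ := h'.subset h le_rfl h1' h2' h1 h2
    rw [h3.antisymm h5, h4.antisymm h6]
  let T : DyckTiling n :=
    { lower := P
      upper := Q
      below := fun x => by
        rcases lt_or_ge (x + n) 0 with h | h
        · rw [P.ht_eq_zero_of_neg h, Q.ht_eq_zero_of_neg h]
        · rcases le_or_gt (n : ℤ) x with h' | h'
          · rw [P.ht_eq_zero_of_gt h', Q.ht_eq_zero_of_gt h']
          · obtain ⟨k, hk⟩ := Int.eq_ofNat_of_zero_le h
            rw [P.ht_eq_pt hk, Q.ht_eq_pt hk, hQ k (by omega)]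
            omega
      tiles := P.runTiles t c
      isDyck := fun u hu => by
        obtain ⟨a, b, l, h, rfl⟩ := mem_runTiles.mp hu
        exact h.isDyckTile hg
      disj := fun u hu v hv huv => by
        obtain ⟨a, b, l, h, rfl⟩ := mem_runTiles.mp hu
        obtain ⟨a', b', l', h', rfl⟩ := mem_runTiles.mp hv
        rw [disjoint_left]
        intro p hp hp'
        obtain ⟨k, -, -, rfl⟩ := mem_seg.mp hp
        exact huv (heq h h' hp hp')
      cover := by
        ext p
        rw [P.mem_skewCells hQ, mem_biUnion]
        constructor
        · rintro ⟨u, hu, hp⟩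
          obtain ⟨a, b, l, h, rfl⟩ := mem_runTiles.mp hu
          obtain ⟨k, h1, h2, rfl⟩ := mem_seg.mp hp
          exact ⟨k, h2.trans h.le_two_mul, l, h.lt_count hg h1 h2, rfl⟩
        · rintro ⟨k, hk, l, hl, rfl⟩
          obtain ⟨a, b, h, h1, h2⟩ := hg.exists_isRun hk hl
          exact ⟨_, mem_runTiles.mpr ⟨a, b, l, h, rfl⟩, cell_mem_seg.mpr ⟨h1, h2, rfl⟩⟩ }
  have hT : T.CoverInclusive := by
    rintro u hu v hv ⟨p, hp, q, hq, hpq, hlt⟩ r hr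
    obtain ⟨a, b, l, h, rfl⟩ := mem_runTiles.mp hu
    obtain ⟨a', b', l', h', rfl⟩ := mem_runTiles.mp hv
    obtain ⟨k, h1, h2, rfl⟩ := mem_seg.mp hp
    obtain ⟨k', h1', h2', rfl⟩ := mem_seg.mp hq
    obtain ⟨m, h3, h4, rfl⟩ := mem_seg.mp hr
    simp only [cell] at hpq hlt
    obtain rfl : k = k' := by omega
    obtain ⟨h5, h6⟩ := h.subset h' (by omega) h1 h2 h1' h2'
    exact ⟨_, cell_mem_seg.mpr ⟨h5.trans h3, h4.trans h6, rfl⟩⟩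
  refine ⟨T, hT, rfl, fun k hk => ?_, fun s hs => ?_⟩
  · have h1 := T.upper_pt hk
    have h2 : T.upper.pt k = T.lower.pt k + 2 * c k := hQ k hk
    omega
  · refine eq_of_forall_lt_iff fun l => ?_
    rw [← hT.crosses_iff]
    constructor
    · rintro ⟨u, hu, h1, h2⟩
      obtain ⟨a, b, l, h, rfl⟩ := mem_runTiles.mp hu
      obtain ⟨h3, -, rfl⟩ := cell_mem_seg.mp h1
      exact h.cross s h3 (cell_mem_seg.mp h2).2.1
    · intro hl
      obtain ⟨a, b, h, h1, h2⟩ := hg.exists_isRun hs.le (hl.trans_le (hg.le_left s hs))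
      have hsb : s ≠ b := by
        rintro rfl
        exact absurd h.right (by omega)
      exact ⟨_, mem_runTiles.mpr ⟨a, b, l, h, rfl⟩, cell_mem_seg.mpr ⟨h1, h2, rfl⟩,
        cell_mem_seg.mpr ⟨by omega, by omega, rfl⟩⟩

lemma codeList_congr {t' c' : ℕ → ℕ} {k : ℕ} :
    codeList t c 0 k = codeList t' c' 0 k ↔ ∀ s < k, t s = t' s ∧ c (s + 1) = c' (s + 1) := by
  simp [codeList, List.map_inj_left]

/-- The generating function of cover-inclusive tilings by discrepancy as a sum over codes. -/
theorem finsum_dis_eq_sum_codes {R : Type*} [CommSemiring R] (P : DyckPath n) (z : R) :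
    ∑ᶠ T : {T : DyckTiling n // T.CoverInclusive ∧ T.lower = P}, z ^ T.1.dis =
      ∑ d ∈ codes P.word 0 0 0, z ^ codeDis P.word 0 d := by
  have hcode : ∀ T : {T : DyckTiling n // T.CoverInclusive ∧ T.lower = P},
      codeList T.1.crossCount T.1.colCount 0 (2 * n) ∈ codes P.word 0 0 0 := by
    rintro ⟨T, hT, rfl⟩
    exact (codeList_mem_codes_word hT.goodCode.start).mpr hT.goodCode
  rw [← sum_coe_sort, ← finsum_eq_sum_of_fintype]
  refine finsum_eq_of_bijective (fun T => ⟨_, hcode T⟩) ⟨?_, ?_⟩ ?_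
  · rintro ⟨T, hT, rfl⟩ ⟨U, hU, hlow⟩ h
    have h1 := codeList_congr.mp (Subtype.ext_iff.mp h)
    refine Subtype.ext (hT.eq_of_code_eq hU hlow.symm (fun k hk => ?_) fun s hs => (h1 s hs).1)
    rcases k with - | k
    · rw [hT.goodCode.start, hU.goodCode.start]
    · exact (h1 k hk).2
  · rintro ⟨d, hd⟩
    obtain ⟨t, c, hg, rfl⟩ := exists_goodCode hd
    obtain ⟨T, hT, hlow, hcol, hcross⟩ := hg.exists_tiling
    exact ⟨⟨T, hT, hlow⟩, Subtype.ext (codeList_congr.mpr fun s hs =>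
      ⟨hcross s hs, hcol (s + 1) hs⟩)⟩
  · rintro ⟨T, hT, rfl⟩
    have := codeDis_codeList (P := T.lower) (t := T.crossCount) (c := T.colCount) (s := 0)
      (k := 2 * n) (by omega)
    rw [List.drop_zero, hT.goodCode.start] at this
    rw [this, T.dis_eq]

end DyckPath

/-- If two Dyck paths of order `n` have isomorphic chord posets, then
their cover-inclusive Dyck tilings have the same generating function by the
discrepancy statistic. -/
theorem dis_generating_function_poset_invariant (n : ℕ) (lam1 lam2 : DyckPath n)
    (h : ∃ (C1 : ChordLabeling lam1) (C2 : ChordLabeling lam2),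
      ∀ i j : Fin n, (C1.l j < C1.l i ∧ C1.r i < C1.r j) ↔
        (C2.l j < C2.l i ∧ C2.r i < C2.r j)) :
    ∑ᶠ T : {T : DyckTiling n // T.CoverInclusive ∧ T.lower = lam1},
        (Polynomial.X : Polynomial ℤ) ^ T.1.dis =
      ∑ᶠ T : {T : DyckTiling n // T.CoverInclusive ∧ T.lower = lam2},
        (Polynomial.X : Polynomial ℤ) ^ T.1.dis := by
  obtain ⟨C1, C2, hC⟩ := h
  rw [lam1.finsum_dis_eq_sum_codes, lam2.finsum_dis_eq_sum_codes]
  have hinj := IsFractionRing.injective (Polynomial ℤ) (FractionRing (Polynomial ℤ))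
  apply hinj
  simp only [map_sum, map_pow]
  rw [sum_codes, sum_codes]
  refine partFun_word_eq (fun h0 => ?_) (fun h1 => ?_) C1 C2 hC
  · exact Polynomial.X_ne_zero (hinj (h0.trans (map_zero _).symm))
  · exact Polynomial.X_ne_C 1 (hinj (h1.trans (map_one _).symm))

end
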